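/- arXiv:1501.01904 — 10 statements merged into one kernel-verified Lean document; each statement's English description precedes it below -/
import Mathlib

section
/- Let A be the incidence matrix of a connected directed graph on n nodes, fix 1 ≤ r < n, let A₁ be the first r rows and A₂ the last n−r rows of A, and set 𝕃₂₁ = A₂A₁ᵀ, 𝕃₂₂ = A₂A₂ᵀ. Then the solution set {(y,z) ∈ ℝʳ × ℝ^{n−r} : 𝕃₂₁ y + 𝕃₂₂ z = 0} is an r-dimensional linear subspace of ℝⁿ, equal to the graph of the linear map y ↦ −𝕃₂₂⁻¹𝕃₂₁ y. -/
open Matrix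

/-- `A` is the incidence matrix of a directed graph: each column has exactly one
entry equal to `+1`, exactly one entry equal to `-1`, and all other entries `0`. -/
def IsIncidenceMatrix {V E : Type*} (A : Matrix V E ℝ) : Prop :=
  ∀ j : E, ∃ i k : V, i ≠ k ∧ A i j = 1 ∧ A k j = -1 ∧
    ∀ l : V, l ≠ i → l ≠ k → A l j = 0

/-- The underlying undirected graph (nodes `a, b` adjacent iff some column of `A`
is nonzero in both rows) is connected. -/
def IsConnectedIncidence {V E : Type*} (A : Matrix V E ℝ) : Prop :=
  ∀ i k : V, Relation.ReflTransGen (fun a b => a ≠ b ∧ ∃ j : E, A a j ≠ 0 ∧ A b j ≠ 0) i k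

/-- Submatrix of `A` formed by the first block of rows (type-1 agents). -/
def firstRows {r s m : ℕ} (A : Matrix (Fin r ⊕ Fin s) (Fin m) ℝ) : Matrix (Fin r) (Fin m) ℝ :=
  A.submatrix Sum.inl id

/-- Submatrix of `A` formed by the last block of rows (type-2 agents). -/
def lastRows {r s m : ℕ} (A : Matrix (Fin r ⊕ Fin s) (Fin m) ℝ) : Matrix (Fin s) (Fin m) ℝ :=
  A.submatrix Sum.inr id

/-- Grounded incidence matrices have trivial left kernel. -/
lemma grounded_ker {r s m : ℕ} (hr : 1 ≤ r)
    (A : Matrix (Fin r ⊕ Fin s) (Fin m) ℝ)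
    (hA : IsIncidenceMatrix A) (hconn : IsConnectedIncidence A)
    (z : Fin s → ℝ) (hz : (lastRows A)ᵀ *ᵥ z = 0) : z = 0 := by
  set w : Fin r ⊕ Fin s → ℝ := Sum.elim 0 z with hw
  have hsum : ∀ j, ∑ v, A v j * w v = 0 := by
    intro j
    have h := congrFun hz j
    simp only [Matrix.mulVec, dotProduct, Matrix.transpose_apply, lastRows,
      Matrix.submatrix_apply, id, Pi.zero_apply] at h
    simp [Fintype.sum_sum_type, hw, h]
  have hedge : ∀ a b, (a ≠ b ∧ ∃ j, A a j ≠ 0 ∧ A b j ≠ 0) → w a = w b := by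
    rintro a b ⟨hab, j, ha, hb⟩
    obtain ⟨i, k, hik, hi, hk, h0⟩ := hA j
    have h := hsum j
    rw [Fintype.sum_eq_add i k hik
      (fun l hl => by rw [h0 l hl.1 hl.2, zero_mul]), hi, hk] at h
    have e : w i = w k := by linarith
    have ha' : a = i ∨ a = k := by
      by_contra hc
      push Not at hc
      exact ha (h0 a hc.1 hc.2)
    have hb' : b = i ∨ b = k := by
      by_contra hc
      push Not at hc
      exact hb (h0 b hc.1 hc.2)
    rcases ha' with rfl | rfl <;> rcases hb' with rfl | rfl <;> simp [e]
  have hall : ∀ a b, w a = w b := by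
    intro a b
    have h := hconn a b
    induction h with
    | refl => rfl
    | tail _ h ih => exact ih.trans (hedge _ _ h)
  funext i
  have := hall (Sum.inr i) (Sum.inl ⟨0, hr⟩)
  simpa [hw] using this

/-- The solution set of the constraint `𝕃₂₁ y + 𝕃₂₂ z = 0` is an `r`-dimensional
subspace of `ℝⁿ = ℝʳ × ℝ^{n-r}`, equal to the graph of `y ↦ -𝕃₂₂⁻¹ 𝕃₂₁ y`. -/
theorem stmt2 {r s m : ℕ} (hr : 1 ≤ r) (hs : 1 ≤ s)
    (A : Matrix (Fin r ⊕ Fin s) (Fin m) ℝ)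
    (hA : IsIncidenceMatrix A) (hconn : IsConnectedIncidence A) :
    let L21 := lastRows A * (firstRows A)ᵀ
    let L22 := lastRows A * (lastRows A)ᵀ
    let S : Submodule ℝ ((Fin r → ℝ) × (Fin s → ℝ)) :=
      LinearMap.ker ((Matrix.mulVecLin L21).coprod (Matrix.mulVecLin L22))
    Module.finrank ℝ S = r ∧
    ∀ (y : Fin r → ℝ) (z : Fin s → ℝ),
      ((y, z) ∈ S ↔ z = -((L22⁻¹ * L21) *ᵥ y)) := by
  intro L21 L22 S
  have hinj : Function.Injective L22.mulVec := by
    rw [← Matrix.coe_mulVecLin, ← LinearMap.ker_eq_bot, LinearMap.ker_eq_bot']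
    intro z hz
    apply grounded_ker hr A hA hconn z
    have h1 : z ⬝ᵥ (L22 *ᵥ z) = 0 := by
      rw [Matrix.mulVecLin_apply] at hz
      rw [hz, dotProduct_zero]
    rw [← Matrix.mulVec_mulVec, Matrix.dotProduct_mulVec, ← Matrix.mulVec_transpose] at h1
    exact dotProduct_self_eq_zero.mp h1
  have hunit : IsUnit L22 := Matrix.mulVec_injective_iff_isUnit.mp hinj
  have hdet : IsUnit L22.det := (Matrix.isUnit_iff_isUnit_det _).mp hunit
  have hsurj : Function.Surjective L22.mulVec := Matrix.mulVec_surjective_iff_isUnit.mpr hunit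
  constructor
  · have h := LinearMap.finrank_range_add_finrank_ker
      ((Matrix.mulVecLin L21).coprod (Matrix.mulVecLin L22))
    have hr' : LinearMap.range ((Matrix.mulVecLin L21).coprod (Matrix.mulVecLin L22)) = ⊤ := by
      rw [LinearMap.range_eq_top]
      intro b
      obtain ⟨z, hz⟩ := hsurj b
      exact ⟨(0, z), by simpa using hz⟩
    rw [hr', finrank_top, Module.finrank_prod] at h
    simp only [Module.finrank_fin_fun] at h
    change s + Module.finrank ℝ S = r + s at h
    omega
  · intro y z
    have hm : (y, z) ∈ S ↔ L21 *ᵥ y + L22 *ᵥ z = 0 := by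
      simp [S, LinearMap.mem_ker]
    have e : L22 *ᵥ (-((L22⁻¹ * L21) *ᵥ y)) = -(L21 *ᵥ y) := by
      rw [Matrix.mulVec_neg, Matrix.mulVec_mulVec, Matrix.mul_nonsing_inv_cancel_left _ _ hdet]
    rw [hm]
    constructor
    · intro h
      apply hinj
      rw [e]
      exact eq_neg_of_add_eq_zero_right h
    · rintro rfl
      rw [e, add_neg_cancel]
end

section
/- Let A be the incidence matrix of a connected directed graph on n nodes, fix 1 ≤ r < n, and set 𝕃_{ij} = A_iA_jᵀ. If (y,z) : ℝ → ℝʳ × ℝ^{n−r} is a differentiable solution of the differential-algebraic system y′ = −𝕃₁₁ y − 𝕃₁₂ z, 0 = 𝕃₂₁ y + 𝕃₂₂ z, then the sum y₁(t) + ⋯ + yᵣ(t) is constant in t. -/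
open Matrix

theorem incidence_col_sum {r s m : ℕ} (A : Matrix (Fin r ⊕ Fin s) (Fin m) ℝ)
    (hA : IsIncidenceMatrix A) (j : Fin m) :
    ∑ i, firstRows A i j + ∑ i, lastRows A i j = 0 := by
  obtain ⟨i, k, hik, hi, hk, h0⟩ := hA j
  have h1 : ∑ i, firstRows A i j + ∑ i, lastRows A i j = ∑ l, A l j := by
    rw [Fintype.sum_sum_type]; rfl
  rw [h1, Finset.sum_eq_add_of_mem i k (Finset.mem_univ _) (Finset.mem_univ _) hik
    (fun l _ hl => h0 l hl.1 hl.2), hi, hk]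
  norm_num

theorem sum_mulVec_eq {r m : ℕ} (B : Matrix (Fin r) (Fin m) ℝ) (w : Fin m → ℝ) :
    ∑ i, (B *ᵥ w) i = ∑ j, (∑ i, B i j) * w j := by
  simp only [Matrix.mulVec, dotProduct, Finset.sum_mul]
  exact Finset.sum_comm

/-- Along any differentiable solution of the DAE `y' = -𝕃₁₁ y - 𝕃₁₂ z`,
`0 = 𝕃₂₁ y + 𝕃₂₂ z`, the sum `y₁(t) + ⋯ + yᵣ(t)` is constant in `t`. -/
theorem stmt4 {r s m : ℕ} (hr : 1 ≤ r) (hs : 1 ≤ s)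
    (A : Matrix (Fin r ⊕ Fin s) (Fin m) ℝ)
    (hA : IsIncidenceMatrix A) (hconn : IsConnectedIncidence A)
    (y : ℝ → Fin r → ℝ) (z : ℝ → Fin s → ℝ)
    (hy : ∀ t : ℝ, HasDerivAt y
      (-((firstRows A * (firstRows A)ᵀ) *ᵥ y t) - (firstRows A * (lastRows A)ᵀ) *ᵥ z t) t)
    (hz : ∀ t : ℝ, (lastRows A * (firstRows A)ᵀ) *ᵥ y t + (lastRows A * (lastRows A)ᵀ) *ᵥ z t = 0) :
    ∀ t t' : ℝ, ∑ i, y t i = ∑ i, y t' i := by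
  have key : ∀ t, HasDerivAt (fun t => ∑ i, y t i) 0 t := by
    intro t
    have h := HasDerivAt.fun_sum (u := Finset.univ) (fun i _ => (hasDerivAt_pi.1 (hy t)) i)
    set w := (firstRows A)ᵀ *ᵥ y t + (lastRows A)ᵀ *ᵥ z t with hw
    have e1 : -((firstRows A * (firstRows A)ᵀ) *ᵥ y t) - (firstRows A * (lastRows A)ᵀ) *ᵥ z t
        = -(firstRows A *ᵥ w) := by
      rw [hw, Matrix.mulVec_add, Matrix.mulVec_mulVec, Matrix.mulVec_mulVec]
      abel
    have e2 : lastRows A *ᵥ w = 0 := by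
      rw [hw, Matrix.mulVec_add, Matrix.mulVec_mulVec, Matrix.mulVec_mulVec]
      exact hz t
    rw [e1] at h
    have e3 : ∑ i, (firstRows A *ᵥ w) i + ∑ i, (lastRows A *ᵥ w) i = 0 := by
      rw [sum_mulVec_eq, sum_mulVec_eq, ← Finset.sum_add_distrib]
      refine Finset.sum_eq_zero fun j _ => ?_
      rw [← add_mul, incidence_col_sum A hA j, zero_mul]
    rw [e2] at e3
    simp only [Pi.zero_apply, Finset.sum_const_zero, add_zero] at e3
    simp only [Pi.neg_apply, Finset.sum_neg_distrib, e3, neg_zero] at h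
    exact h
  intro t t'
  exact is_const_of_deriv_eq_zero (fun t => (key t).differentiableAt) (fun t => (key t).deriv) t t'
end

section
/- Let A be the incidence matrix of a connected directed graph on n nodes, fix 1 ≤ r < n, and set 𝕃_{ij} = A_iA_jᵀ. Then the Schur complement S = 𝕃₁₁ − 𝕃₁₂𝕃₂₂⁻¹𝕃₂₁ ∈ ℝ^{r×r} is symmetric and positive semidefinite, and its kernel is the one-dimensional subspace spanned by the all-ones vector 𝟙ᵣ ∈ ℝʳ (so S has corank one). -/
open Matrix

theorem incid_ker_const {V E : Type*} [Fintype V] (A : Matrix V E ℝ)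
    (hA : IsIncidenceMatrix A) (hconn : IsConnectedIncidence A) (x : V → ℝ)
    (hx : x ᵥ* A = 0) (i k : V) : x i = x k := by
  classical
  have key : ∀ a b : V, (a ≠ b ∧ ∃ j : E, A a j ≠ 0 ∧ A b j ≠ 0) → x a = x b := by
    rintro a b ⟨hab, j, ha, hb⟩
    obtain ⟨p, q, hpq, hp, hq, h0⟩ := hA j
    have hsum : x p * A p j + x q * A q j = 0 := by
      have h := congrFun hx j
      simp only [Matrix.vecMul, dotProduct, Pi.zero_apply] at h
      rw [← h]
      symm
      apply Fintype.sum_eq_add p q hpq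
      rintro l ⟨h1, h2⟩
      rw [h0 l h1 h2, mul_zero]
    rw [hp, hq] at hsum
    have hpq' : x p = x q := by linarith
    have ha' : a = p ∨ a = q := by
      by_contra! h
      exact ha (h0 a h.1 h.2)
    have hb' : b = p ∨ b = q := by
      by_contra! h
      exact hb (h0 b h.1 h.2)
    rcases ha' with rfl | rfl <;> rcases hb' with rfl | rfl <;> simp_all
  have h := hconn i k
  induction h with
  | refl => rfl
  | tail _ h2 ih => exact ih.trans (key _ _ h2)

theorem incid_one {V E : Type*} [Fintype V] (A : Matrix V E ℝ)
    (hA : IsIncidenceMatrix A) : (1 : V → ℝ) ᵥ* A = 0 := by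
  classical
  ext j
  obtain ⟨p, q, hpq, hp, hq, h0⟩ := hA j
  simp only [Matrix.vecMul, dotProduct, Pi.zero_apply, Pi.one_apply, one_mul]
  rw [Fintype.sum_eq_add p q hpq (fun l h => h0 l h.1 h.2), hp, hq]
  norm_num

theorem vecMul_split {r s m : ℕ} (A : Matrix (Fin r ⊕ Fin s) (Fin m) ℝ)
    (x : Fin r → ℝ) (y : Fin s → ℝ) :
    Sum.elim x y ᵥ* A = x ᵥ* firstRows A + y ᵥ* lastRows A := by
  ext j
  simp [Matrix.vecMul, dotProduct, firstRows, lastRows]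

/-- The Schur complement `S = 𝕃₁₁ - 𝕃₁₂ 𝕃₂₂⁻¹ 𝕃₂₁` is symmetric, positive
semidefinite, and its kernel is the span of the all-ones vector `𝟙ᵣ` (corank one). -/
theorem stmt6 {r s m : ℕ} (hr : 1 ≤ r) (hs : 1 ≤ s)
    (A : Matrix (Fin r ⊕ Fin s) (Fin m) ℝ)
    (hA : IsIncidenceMatrix A) (hconn : IsConnectedIncidence A) :
    let L11 := firstRows A * (firstRows A)ᵀ
    let L12 := firstRows A * (lastRows A)ᵀ
    let L21 := lastRows A * (firstRows A)ᵀ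
    let L22 := lastRows A * (lastRows A)ᵀ
    let S := L11 - L12 * L22⁻¹ * L21
    S.IsSymm ∧ S.PosSemidef ∧
    LinearMap.ker (Matrix.mulVecLin S) = Submodule.span ℝ {(1 : Fin r → ℝ)} := by
  intro L11 L12 L21 L22 S
  set A1 := firstRows A with hA1
  set A2 := lastRows A with hA2
  have hU : IsUnit L22 := by
    rw [← Matrix.mulVec_injective_iff_isUnit]
    rw [← Matrix.coe_mulVecLin, ← LinearMap.ker_eq_bot, LinearMap.ker_eq_bot']
    intro y hy
    have h1 : A2ᵀ *ᵥ y = 0 := by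
      have := (Matrix.self_mul_conjTranspose_mulVec_eq_zero A2 y).1
      rw [Matrix.conjTranspose_eq_transpose_of_trivial] at this
      exact this hy
    rw [Matrix.mulVec_transpose] at h1
    have h2 : Sum.elim (0 : Fin r → ℝ) y ᵥ* A = 0 := by
      rw [vecMul_split, ← hA2, h1]; simp
    ext i
    have := incid_ker_const A hA hconn _ h2 (Sum.inr i) (Sum.inl ⟨0, hr⟩)
    simpa using this
  have hdet : IsUnit L22.det := (Matrix.isUnit_iff_isUnit_det _).1 hU
  have hL22T : L22ᵀ = L22 := by simp [L22]
  have hL12T : L12ᵀ = L21 := by simp [L12, L21]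
  set B := A1 - L12 * L22⁻¹ * A2 with hB
  have hBA2 : B * A2ᵀ = 0 := by
    rw [hB, Matrix.sub_mul, Matrix.mul_assoc (L12 * L22⁻¹)]
    change L12 - L12 * L22⁻¹ * L22 = 0
    rw [Matrix.mul_assoc, Matrix.nonsing_inv_mul _ hdet, Matrix.mul_one, sub_self]
  have hBA1 : B * A1ᵀ = S := by
    rw [hB, Matrix.sub_mul, Matrix.mul_assoc (L12 * L22⁻¹)]
  have hS : S = B * Bᵀ := by
    have : Bᵀ = A1ᵀ - A2ᵀ * (L12 * L22⁻¹)ᵀ := by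
      rw [hB, Matrix.transpose_sub, Matrix.transpose_mul (L12 * L22⁻¹)]
    rw [this, Matrix.mul_sub, ← Matrix.mul_assoc, hBA2, Matrix.zero_mul, sub_zero, hBA1]
  have hSH : S = B * Bᴴ := by rw [hS, Matrix.conjTranspose_eq_transpose_of_trivial]
  refine ⟨?_, ?_, ?_⟩
  · rw [hS, Matrix.IsSymm, Matrix.transpose_mul, Matrix.transpose_transpose]
  · rw [hSH]; exact Matrix.posSemidef_self_mul_conjTranspose B
  · have hone := incid_one A hA
    have h11 : (1 : Fin r ⊕ Fin s → ℝ) = Sum.elim (1 : Fin r → ℝ) (1 : Fin s → ℝ) := by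
      ext i; cases i <;> rfl
    rw [h11, vecMul_split, ← hA1, ← hA2] at hone
    have hone' : (1 : Fin r → ℝ) ᵥ* A1 = -((1 : Fin s → ℝ) ᵥ* A2) := eq_neg_of_add_eq_zero_left hone
    have hker : ∀ x : Fin r → ℝ, S *ᵥ x = 0 ↔ x ᵥ* B = 0 := by
      intro x
      rw [hSH, Matrix.self_mul_conjTranspose_mulVec_eq_zero,
        Matrix.conjTranspose_eq_transpose_of_trivial, Matrix.mulVec_transpose]
    have hx1 : S *ᵥ (1 : Fin r → ℝ) = 0 := by
      rw [hker, hB, Matrix.vecMul_sub, ← Matrix.vecMul_vecMul, ← Matrix.vecMul_vecMul]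
      have : (1 : Fin r → ℝ) ᵥ* L12 = -((1 : Fin s → ℝ) ᵥ* L22) := by
        change 1 ᵥ* (A1 * A2ᵀ) = -(1 ᵥ* (A2 * A2ᵀ))
        rw [← Matrix.vecMul_vecMul, hone', Matrix.neg_vecMul, Matrix.vecMul_vecMul]
      rw [this, Matrix.neg_vecMul, Matrix.vecMul_vecMul, Matrix.mul_nonsing_inv _ hdet,
        Matrix.vecMul_one, Matrix.neg_vecMul, hone', sub_self]
    ext x
    rw [LinearMap.mem_ker, Matrix.mulVecLin_apply, Submodule.mem_span_singleton]
    constructor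
    · intro h
      rw [hker, hB, Matrix.vecMul_sub, ← Matrix.vecMul_vecMul] at h
      have h2 : Sum.elim x (-(x ᵥ* (L12 * L22⁻¹))) ᵥ* A = 0 := by
        rw [vecMul_split, ← hA1, ← hA2, Matrix.neg_vecMul, ← sub_eq_add_neg]
        exact h
      refine ⟨x ⟨0, hr⟩, ?_⟩
      ext i
      have := incid_ker_const A hA hconn _ h2 (Sum.inl ⟨0, hr⟩) (Sum.inl i)
      simpa using this
    · rintro ⟨c, rfl⟩
      rw [Matrix.mulVec_smul, hx1, smul_zero]
end

section
/- Let A be the incidence matrix of a connected directed graph on n nodes, fix 1 ≤ r < n, and set 𝕃_{ij} = A_iA_jᵀ. Let (y,z) : [0,∞) → ℝʳ × ℝ^{n−r} be a differentiable solution of y′ = −𝕃₁₁ y − 𝕃₁₂ z, 0 = 𝕃₂₁ y + 𝕃₂₂ z, with consistent initial value (y(0), z(0)) (i.e. 𝕃₂₁ y(0) + 𝕃₂₂ z(0) = 0). Set c = (y₁(0) + ⋯ + yᵣ(0))/r. Then (y(t), z(t)) converges exponentially to the equilibrium c·𝟙: there exist constants C ≥ 0 and λ > 0 such that ‖(y(t),z(t))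 − c·𝟙‖ ≤ C e^{−λt} for all t ≥ 0, where 𝟙 ∈ ℝⁿ is the all-ones vector. -/
open Matrix

lemma incidence_sum {V : Type*} [Fintype V] [DecidableEq V] {E : Type*} {A : Matrix V E ℝ}
    (hA : IsIncidenceMatrix A) (j : E) (x : V → ℝ) :
    ∃ i k : V, i ≠ k ∧ (∀ l, A l j ≠ 0 → l = i ∨ l = k) ∧ ∑ l, A l j * x l = x i - x k := by
  obtain ⟨i, k, hik, hi, hk, h0⟩ := hA j
  refine ⟨i, k, hik, ?_, ?_⟩
  · intro l hl
    by_contra! h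
    exact hl (h0 l h.1 h.2)
  · rw [Fintype.sum_eq_add i k hik (fun l hl => by rw [h0 l hl.1 hl.2, zero_mul]), hi, hk]
    ring

lemma incidence_const {V : Type*} [Fintype V] [DecidableEq V] {E : Type*} {A : Matrix V E ℝ}
    (hA : IsIncidenceMatrix A) (hc : IsConnectedIncidence A) (x : V → ℝ)
    (hx : ∀ j, ∑ l, A l j * x l = 0) (a b : V) : x a = x b := by
  have h := hc a b
  induction h with
  | refl => rfl
  | tail _ h ih =>
    obtain ⟨hne, j, h1, h2⟩ := h
    obtain ⟨i, k, hik, hl, hs⟩ := incidence_sum hA j x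
    rw [hx j] at hs
    rcases hl _ h1 with rfl | rfl <;> rcases hl _ h2 with rfl | rfl
    · exact ih
    · linarith
    · linarith
    · exact ih

lemma norm_sq_le_dot {n : ℕ} (v : Fin n → ℝ) : ‖v‖ ^ 2 ≤ v ⬝ᵥ v := by
  have h0 : 0 ≤ v ⬝ᵥ v := Finset.sum_nonneg fun i _ => mul_self_nonneg _
  have : ‖v‖ ≤ Real.sqrt (v ⬝ᵥ v) := by
    rw [pi_norm_le_iff_of_nonneg (Real.sqrt_nonneg _)]
    intro i
    rw [Real.norm_eq_abs]
    apply Real.abs_le_sqrt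
    have := Finset.single_le_sum (f := fun i => v i * v i) (fun i _ => mul_self_nonneg _)
      (Finset.mem_univ i)
    simpa [sq, dotProduct] using this
  calc ‖v‖ ^ 2 ≤ Real.sqrt (v ⬝ᵥ v) ^ 2 := by gcongr
    _ = _ := Real.sq_sqrt h0

lemma dot_le_norm_sq {n : ℕ} (v : Fin n → ℝ) : v ⬝ᵥ v ≤ n * ‖v‖ ^ 2 := by
  have : ∀ i ∈ Finset.univ, v i * v i ≤ ‖v‖ ^ 2 := by
    intro i _
    have h := norm_le_pi_norm v i
    rw [← sq, ← sq_abs]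
    rw [Real.norm_eq_abs] at h
    gcongr
  simpa [dotProduct] using Finset.sum_le_sum this

lemma mulVec_dot_bound {n m : ℕ} (B : Matrix (Fin m) (Fin n) ℝ) :
    ∃ M : ℝ, 0 ≤ M ∧ ∀ u, (B *ᵥ u) ⬝ᵥ (B *ᵥ u) ≤ M * (u ⬝ᵥ u) := by
  refine ⟨∑ j, ∑ i, B j i ^ 2, by positivity, fun u => ?_⟩
  rw [Finset.sum_mul]
  refine Finset.sum_le_sum fun j _ => ?_
  have := Finset.sum_mul_sq_le_sq_mul_sq Finset.univ (B j) u
  simpa [mulVec, dotProduct, sq] using this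

lemma exp_decay {V : ℝ → ℝ} {V' : ℝ → ℝ} {a : ℝ}
    (h : ∀ t, 0 ≤ t → HasDerivAt V (V' t) t) (hle : ∀ t, 0 ≤ t → V' t ≤ -a * V t)
    (t : ℝ) (ht : 0 ≤ t) : V t ≤ V 0 * Real.exp (-a * t) := by
  have hd : ∀ t, 0 ≤ t → HasDerivAt (fun t => V t * Real.exp (a * t))
      (V' t * Real.exp (a * t) + V t * (Real.exp (a * t) * a)) t := by
    intro t ht
    refine (h t ht).mul ?_
    simpa using ((hasDerivAt_id t).const_mul a).exp
  have hanti : AntitoneOn (fun t => V t * Real.exp (a * t)) (Set.Ici 0) := by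
    apply antitoneOn_of_deriv_nonpos (convex_Ici 0)
    · exact fun t ht => (hd t ht).continuousAt.continuousWithinAt
    · intro t ht
      rw [interior_Ici] at ht
      exact (hd t (le_of_lt ht)).differentiableAt.differentiableWithinAt
    · intro t ht
      rw [interior_Ici] at ht
      rw [(hd t (le_of_lt ht)).deriv]
      have := hle t (le_of_lt ht)
      have he := Real.exp_pos (a * t)
      nlinarith
  have h1 := hanti (Set.mem_Ici.2 le_rfl) (Set.mem_Ici.2 ht) ht
  simp only [mul_zero, Real.exp_zero, mul_one] at h1
  have h2 : V t = V t * Real.exp (a * t) * Real.exp (-a * t) := by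
    rw [mul_assoc, ← Real.exp_add]; simp
  rw [h2]
  gcongr

lemma coercive {r s m : ℕ} (hr : 1 ≤ r) (B : Matrix (Fin r) (Fin m) ℝ)
    (D : Matrix (Fin s) (Fin m) ℝ)
    (hinj : ∀ u w, Bᵀ *ᵥ u + Dᵀ *ᵥ w = 0 → ∃ c : ℝ, u = (fun _ => c) ∧ w = fun _ => c) :
    ∃ K : ℝ, 0 < K ∧ ∀ u w, ∑ i, u i = 0 →
      ‖((u, w) : (Fin r → ℝ) × (Fin s → ℝ))‖ ≤ K * ‖Bᵀ *ᵥ u + Dᵀ *ᵥ w‖ := by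
  let L : ((Fin r → ℝ) × (Fin s → ℝ)) →ₗ[ℝ] (Fin m → ℝ) × ℝ :=
    { toFun := fun x => (Bᵀ *ᵥ x.1 + Dᵀ *ᵥ x.2, ∑ i, x.1 i)
      map_add' := by
        intro x x'
        ext
        · simp [mulVec_add]; ring
        · simp [Finset.sum_add_distrib]
      map_smul' := by
        intro a x
        ext
        · simp [mulVec_smul]
        · simp [Finset.mul_sum] }
  have hker : LinearMap.ker L = ⊥ := by
    rw [LinearMap.ker_eq_bot']
    rintro ⟨u, w⟩ h
    have h1 : Bᵀ *ᵥ u + Dᵀ *ᵥ w = 0 := congrArg Prod.fst h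
    have h2 : ∑ i, u i = 0 := congrArg Prod.snd h
    obtain ⟨c, rfl, rfl⟩ := hinj u w h1
    have hc : c = 0 := by
      simp at h2
      rcases h2 with h2 | h2
      · omega
      · exact h2
    subst hc
    rfl
  obtain ⟨K, hK, hL⟩ := L.exists_antilipschitzWith hker
  refine ⟨K, hK, fun u w hu => ?_⟩
  have := hL.le_mul_dist (u, w) 0
  rw [map_zero, dist_zero_right, dist_zero_right] at this
  have hn : ‖L (u, w)‖ = ‖Bᵀ *ᵥ u + Dᵀ *ᵥ w‖ := by
    change ‖((Bᵀ *ᵥ u + Dᵀ *ᵥ w, ∑ i, u i) : (Fin m → ℝ) × ℝ)‖ = _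
    rw [hu, Prod.norm_mk]; simp
  rwa [hn] at this

lemma dae_decay {r s m : ℕ} (hr : 1 ≤ r) (B : Matrix (Fin r) (Fin m) ℝ)
    (D : Matrix (Fin s) (Fin m) ℝ)
    (hone : Bᵀ *ᵥ (fun _ => 1) + Dᵀ *ᵥ (fun _ => 1) = 0)
    (hinj : ∀ u w, Bᵀ *ᵥ u + Dᵀ *ᵥ w = 0 → ∃ c : ℝ, u = (fun _ => c) ∧ w = fun _ => c)
    (y : ℝ → Fin r → ℝ) (z : ℝ → Fin s → ℝ)
    (hy : ∀ t : ℝ, 0 ≤ t → HasDerivAt y (-(B *ᵥ (Bᵀ *ᵥ y t + Dᵀ *ᵥ z t))) t)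
    (hz : ∀ t : ℝ, 0 ≤ t → D *ᵥ (Bᵀ *ᵥ y t + Dᵀ *ᵥ z t) = 0) (c : ℝ)
    (hc : c = (∑ i, y 0 i) / r) :
    ∃ C : ℝ, 0 ≤ C ∧ ∃ lam : ℝ, 0 < lam ∧ ∀ t : ℝ, 0 ≤ t →
      ‖((y t - fun _ => c, z t - fun _ => c) : (Fin r → ℝ) × (Fin s → ℝ))‖ ≤
        C * Real.exp (-lam * t) := by
  obtain ⟨K, hK, hcoer⟩ := coercive hr B D hinj
  obtain ⟨M, hM, hB⟩ := mulVec_dot_bound Bᵀ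
  have hr0 : (0 : ℝ) < r := by exact_mod_cast hr
  set v : ℝ → Fin m → ℝ := fun t => Bᵀ *ᵥ y t + Dᵀ *ᵥ z t with hv
  set u : ℝ → Fin r → ℝ := fun t => y t - fun _ => c with hu
  set w : ℝ → Fin s → ℝ := fun t => z t - fun _ => c with hw
  have hyv : ∀ t, 0 ≤ t → HasDerivAt y (-(B *ᵥ v t)) t := hy
  have hzv : ∀ t, 0 ≤ t → D *ᵥ v t = 0 := hz
  have hvu : ∀ t, Bᵀ *ᵥ u t + Dᵀ *ᵥ w t = v t := by
    intro t
    have e1 : (fun _ : Fin r => c) = c • (fun _ => (1 : ℝ)) := by ext; simp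
    have e2 : (fun _ : Fin s => c) = c • (fun _ => (1 : ℝ)) := by ext; simp
    simp only [hu, hw, hv, e1, e2, mulVec_sub, mulVec_smul]
    have : Bᵀ *ᵥ (fun _ => (1 : ℝ)) = - (Dᵀ *ᵥ (fun _ => 1)) := eq_neg_of_add_eq_zero_left hone
    rw [this, smul_neg]
    abel
  have hDw : ∀ t, 0 ≤ t → ∀ w', (Dᵀ *ᵥ w') ⬝ᵥ v t = 0 := by
    intro t ht w'
    rw [mulVec_transpose, ← dotProduct_mulVec, hzv t ht, dotProduct_zero]
  have hBu : ∀ t, ∀ u', (Bᵀ *ᵥ u') ⬝ᵥ v t = u' ⬝ᵥ (B *ᵥ v t) := by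
    intro t u'
    rw [mulVec_transpose, ← dotProduct_mulVec]
  have hvv : ∀ t, 0 ≤ t → v t ⬝ᵥ v t = (Bᵀ *ᵥ u t) ⬝ᵥ v t := by
    intro t ht
    conv_lhs => rw [← hvu t]
    rw [hvu t, ← hvu t, add_dotProduct, hvu t, hDw t ht, add_zero]
  have hyi : ∀ t, 0 ≤ t → ∀ i, HasDerivAt (fun t => u t i) (-(B *ᵥ v t) i) t := by
    intro t ht i
    have := (hasDerivAt_pi.1 (hyv t ht) i).sub_const c
    simpa [hu] using this
  -- conservation
  have hcons : ∀ t, 0 ≤ t → ∑ i, u t i = 0 := by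
    have h0 : ∑ i, u 0 i = 0 := by
      simp only [hu, Pi.sub_apply, Finset.sum_sub_distrib]
      simp [hc]
      field_simp
      try simp
    have hd : ∀ t, 0 ≤ t → HasDerivAt (fun t => ∑ i, u t i) 0 t := by
      intro t ht
      have h1 := HasDerivAt.fun_sum (u := Finset.univ) (fun i _ => hyi t ht i)
      refine h1.congr_deriv ?_
      have h2 := hBu t (fun _ => 1)
      rw [eq_neg_of_add_eq_zero_left hone, neg_dotProduct, hDw t ht] at h2
      simp [dotProduct] at h2
      simp [← h2]
    intro t ht
    have a1 := exp_decay (a := 0) hd (by simp) t ht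
    have a2 := exp_decay (a := 0) (fun t ht => (hd t ht).neg) (by simp) t ht
    simp [h0] at a1 a2
    exact le_antisymm a1 a2
  have hnn : ∀ t, 0 ≤ v t ⬝ᵥ v t := fun t => Finset.sum_nonneg fun i _ => mul_self_nonneg _
  have hx : ∀ t, 0 ≤ t → ‖(u t, w t)‖ ^ 2 ≤ K ^ 2 * (v t ⬝ᵥ v t) := by
    intro t ht
    have h1 := hcoer (u t) (w t) (hcons t ht)
    rw [hvu t] at h1
    calc ‖(u t, w t)‖ ^ 2 ≤ (K * ‖v t‖) ^ 2 := by gcongr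
      _ = K ^ 2 * ‖v t‖ ^ 2 := by ring
      _ ≤ _ := by gcongr; exact norm_sq_le_dot _
  have hV : ∀ t, 0 ≤ t → u t ⬝ᵥ u t ≤ r * K ^ 2 * (v t ⬝ᵥ v t) := by
    intro t ht
    calc u t ⬝ᵥ u t ≤ r * ‖u t‖ ^ 2 := dot_le_norm_sq _
      _ ≤ r * ‖(u t, w t)‖ ^ 2 := by gcongr; exact norm_fst_le (u t, w t)
      _ ≤ r * (K ^ 2 * (v t ⬝ᵥ v t)) := by gcongr; exact hx t ht
      _ = _ := by ring
  have hvM : ∀ t, 0 ≤ t → v t ⬝ᵥ v t ≤ M * (u t ⬝ᵥ u t) := by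
    intro t ht
    refine le_trans ?_ (hB (u t))
    have h1 := hvv t ht
    have h2 : 0 ≤ (Bᵀ *ᵥ u t - v t) ⬝ᵥ (Bᵀ *ᵥ u t - v t) :=
      Finset.sum_nonneg fun i _ => mul_self_nonneg _
    rw [sub_dotProduct, dotProduct_sub, dotProduct_sub, dotProduct_comm (v t) (Bᵀ *ᵥ u t),
      ← h1] at h2
    linarith
  have hVd : ∀ t, 0 ≤ t → HasDerivAt (fun t => u t ⬝ᵥ u t) (-2 * (v t ⬝ᵥ v t)) t := by
    intro t ht
    have h1 := HasDerivAt.fun_sum (u := Finset.univ)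
      (fun i _ => (hyi t ht i).mul (hyi t ht i))
    refine HasDerivAt.congr_deriv (f := fun t => u t ⬝ᵥ u t) h1 (Eq.symm ?_)
    rw [hvv t ht, hBu t, dotProduct, Finset.mul_sum]
    refine Finset.sum_congr rfl fun i _ => ?_
    ring
  set a : ℝ := 1 / (r * K ^ 2) with ha
  have ha0 : 0 < a := by positivity
  have hdec := exp_decay (a := 2 * a) hVd (by
    intro t ht
    have h1 := hV t ht
    have h2 : a * (u t ⬝ᵥ u t) ≤ v t ⬝ᵥ v t := by
      rw [ha, one_div, inv_mul_le_iff₀ (by positivity)]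
      exact h1
    linarith)
  have hV0 : 0 ≤ u 0 ⬝ᵥ u 0 := Finset.sum_nonneg fun i _ => mul_self_nonneg _
  refine ⟨Real.sqrt (K ^ 2 * (M * (u 0 ⬝ᵥ u 0))), Real.sqrt_nonneg _, a, ha0, fun t ht => ?_⟩
  change ‖(u t, w t)‖ ≤ _
  refine (sq_le_sq₀ (norm_nonneg _) (by positivity)).1 ?_
  rw [mul_pow, Real.sq_sqrt (by positivity), ← Real.exp_nat_mul]
  calc ‖(u t, w t)‖ ^ 2 ≤ K ^ 2 * (v t ⬝ᵥ v t) := hx t ht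
    _ ≤ K ^ 2 * (M * (u t ⬝ᵥ u t)) := by gcongr; exact hvM t ht
    _ ≤ K ^ 2 * (M * (u 0 ⬝ᵥ u 0 * Real.exp (-(2 * a) * t))) := by gcongr; exact hdec t ht
    _ = _ := by
      rw [show ((2 : ℕ) : ℝ) * (-a * t) = -(2 * a) * t by push_cast; ring]
      ring

/-- Any solution of the DAE `y' = -𝕃₁₁ y - 𝕃₁₂ z`, `0 = 𝕃₂₁ y + 𝕃₂₂ z` on `[0,∞)`
with consistent initial value converges exponentially to the equilibrium `c·𝟙`,
where `c = (y₁(0) + ⋯ + yᵣ(0))/r`. -/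
theorem stmt7 {r s m : ℕ} (hr : 1 ≤ r) (hs : 1 ≤ s)
    (A : Matrix (Fin r ⊕ Fin s) (Fin m) ℝ)
    (hA : IsIncidenceMatrix A) (hconn : IsConnectedIncidence A)
    (y : ℝ → Fin r → ℝ) (z : ℝ → Fin s → ℝ)
    (hy : ∀ t : ℝ, 0 ≤ t → HasDerivAt y
      (-((firstRows A * (firstRows A)ᵀ) *ᵥ y t) - (firstRows A * (lastRows A)ᵀ) *ᵥ z t) t)
    (hz : ∀ t : ℝ, 0 ≤ t →
      (lastRows A * (firstRows A)ᵀ) *ᵥ y t + (lastRows A * (lastRows A)ᵀ) *ᵥ z t = 0) :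
    let c : ℝ := (∑ i, y 0 i) / r
    ∃ C : ℝ, 0 ≤ C ∧ ∃ lam : ℝ, 0 < lam ∧ ∀ t : ℝ, 0 ≤ t →
      ‖((y t - fun _ => c, z t - fun _ => c) : (Fin r → ℝ) × (Fin s → ℝ))‖ ≤
        C * Real.exp (-lam * t) := by
  intro c
  have key : ∀ (x : Fin r → ℝ) (x' : Fin s → ℝ) (j : Fin m),
      ((firstRows A)ᵀ *ᵥ x + (lastRows A)ᵀ *ᵥ x') j = ∑ l, A l j * Sum.elim x x' l := by
    intro x x' j
    simp [mulVec, dotProduct, firstRows, lastRows]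
  refine dae_decay hr (firstRows A) (lastRows A) ?_ ?_ y z ?_ ?_ c rfl
  · ext j
    rw [key]
    obtain ⟨i, k, -, -, h⟩ := incidence_sum hA j (Sum.elim (fun _ => 1) (fun _ => 1))
    rw [h]
    rcases i with i | i <;> rcases k with k | k <;> simp
  · intro u w h
    have hx := incidence_const hA hconn (Sum.elim u w)
      (fun j => by rw [← key, h]; rfl)
    refine ⟨u ⟨0, hr⟩, ?_, ?_⟩
    · ext i
      exact hx (Sum.inl i) (Sum.inl ⟨0, hr⟩)
    · ext i
      exact hx (Sum.inr i) (Sum.inl ⟨0, hr⟩)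
  · intro t ht
    convert hy t ht using 1
    rw [mulVec_add, mulVec_mulVec, mulVec_mulVec]
    abel
  · intro t ht
    rw [mulVec_add, mulVec_mulVec, mulVec_mulVec]
    exact hz t ht
end

section
/- Let A be the incidence matrix of a connected directed graph on n nodes and let x : [0,∞) → ℝⁿ be a differentiable solution of x′ = −A Aᵀ x. Then x(t) converges, as t → ∞, to the constant vector all of whose components equal the arithmetic mean (x₁(0) + ⋯ + xₙ(0))/n of the initial values. -/
open Matrix

lemma incidence_col {n m : ℕ} (A : Matrix (Fin n) (Fin m) ℝ)
    (hA : IsIncidenceMatrix A) (j : Fin m) :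
    ∃ i k : Fin n, (∀ l, A l j ≠ 0 → l = i ∨ l = k) ∧
      ∀ z : Fin n → ℝ, ∑ l, A l j * z l = z i - z k := by
  obtain ⟨i, k, hik, h1, h2, h3⟩ := hA j
  refine ⟨i, k, ?_, ?_⟩
  · intro l hl
    by_contra hc
    push Not at hc
    exact hl (h3 l hc.1 hc.2)
  · intro z
    have h : ∀ l, A l j * z l = (if l = i then z i else 0) - (if l = k then z k else 0) := by
      intro l
      by_cases hi : l = i
      · subst hi
        simp [h1, hik]
      · by_cases hk : l = k
        · subst hk
          simp [h2, hi]
        · simp [hi, hk, h3 l hi hk]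
    simp [h, Finset.sum_sub_distrib]

/-- Dirichlet energy. -/
def dirEnergy {n m : ℕ} (A : Matrix (Fin n) (Fin m) ℝ) (z : Fin n → ℝ) : ℝ :=
  ∑ j, (∑ l, A l j * z l) ^ 2

lemma dirEnergy_nonneg {n m : ℕ} (A : Matrix (Fin n) (Fin m) ℝ) (z : Fin n → ℝ) :
    0 ≤ dirEnergy A z := Finset.sum_nonneg fun _ _ => sq_nonneg _

lemma pair_bound {n m : ℕ} (A : Matrix (Fin n) (Fin m) ℝ)
    (hA : IsIncidenceMatrix A) (hconn : IsConnectedIncidence A) (a b : Fin n) :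
    ∃ C : ℝ, 0 ≤ C ∧ ∀ z : Fin n → ℝ, (z a - z b) ^ 2 ≤ C * dirEnergy A z := by
  induction hconn a b with
  | refl => exact ⟨0, le_rfl, fun z => by simp⟩
  | @tail b c _ hbc ih =>
    obtain ⟨C, hC, h⟩ := ih
    obtain ⟨hne, j, hb, hc⟩ := hbc
    refine ⟨2 * C + 2, by positivity, fun z => ?_⟩
    have h1 : (z b - z c) ^ 2 ≤ dirEnergy A z := by
      obtain ⟨i, k, h3, h4⟩ := incidence_col A hA j
      have h5 : (∑ l, A l j * z l) ^ 2 ≤ dirEnergy A z :=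
        Finset.single_le_sum (f := fun j => (∑ l, A l j * z l) ^ 2)
          (fun _ _ => sq_nonneg _) (Finset.mem_univ j)
      rw [h4] at h5
      rcases h3 b hb with rfl | rfl <;> rcases h3 c hc with rfl | rfl
      · exact absurd rfl hne
      · exact h5
      · linarith [sq_nonneg (z b - z c), sub_sq_comm (z b) (z c)]
      · exact absurd rfl hne
    nlinarith [h z, sq_nonneg ((z a - z b) - (z b - z c))]

lemma poincare {n m : ℕ} (A : Matrix (Fin n) (Fin m) ℝ)
    (hA : IsIncidenceMatrix A) (hconn : IsConnectedIncidence A) :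
    ∃ K : ℝ, 0 < K ∧ ∀ z : Fin n → ℝ, ∑ i, z i = 0 →
      n * ∑ i, z i ^ 2 ≤ K * dirEnergy A z := by
  choose C hC h using pair_bound A hA hconn
  refine ⟨(∑ a, ∑ b, C a b) + 1, ?_, fun z hz => ?_⟩
  · have : 0 ≤ ∑ a, ∑ b, C a b :=
      Finset.sum_nonneg fun a _ => Finset.sum_nonneg fun b _ => hC a b
    linarith
  · have h1 : ∑ a, ∑ b, (z a - z b) ^ 2 ≤ (∑ a, ∑ b, C a b) * dirEnergy A z := by
      simp only [Finset.sum_mul]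
      exact Finset.sum_le_sum fun a _ => Finset.sum_le_sum fun b _ => h a b z
    have h2 : ∑ a, ∑ b, (z a - z b) ^ 2 = 2 * (n * ∑ i, z i ^ 2) := by
      simp only [sub_sq, Finset.sum_add_distrib, Finset.sum_sub_distrib, ← Finset.mul_sum, hz]
      simp [← Finset.mul_sum]
      ring
    have h3 : 0 ≤ n * ∑ i, z i ^ 2 := by positivity
    linarith [dirEnergy_nonneg A z]

lemma lap_dot {n m : ℕ} (A : Matrix (Fin n) (Fin m) ℝ) (y z : Fin n → ℝ) :
    ∑ i, y i * ((A * Aᵀ) *ᵥ z) i = ∑ j, (∑ l, A l j * y l) * (∑ l, A l j * z l) := by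
  have : ∑ i, y i * ((A * Aᵀ) *ᵥ z) i = y ⬝ᵥ ((A * Aᵀ) *ᵥ z) := rfl
  rw [this, ← Matrix.mulVec_mulVec, Matrix.dotProduct_mulVec]
  simp [dotProduct, Matrix.vecMul, Matrix.mulVec, mul_comm]

theorem stmt8 {n m : ℕ} (A : Matrix (Fin n) (Fin m) ℝ)
    (hA : IsIncidenceMatrix A) (hconn : IsConnectedIncidence A)
    (x : ℝ → Fin n → ℝ)
    (hx : ∀ t : ℝ, 0 ≤ t → HasDerivAt x (-((A * Aᵀ) *ᵥ x t)) t) :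
    Filter.Tendsto x Filter.atTop (nhds (fun _ => (∑ i, x 0 i) / n)) := by
  rcases Nat.eq_zero_or_pos n with rfl | hn
  · rw [tendsto_pi_nhds]
    exact fun i => i.elim0
  have hn' : (0 : ℝ) < n := by exact_mod_cast hn
  have hcol : ∀ (c : ℝ) j, ∑ l, A l j * c = 0 := by
    intro c j
    obtain ⟨i, k, -, h⟩ := incidence_col A hA j
    simpa using h fun _ => c
  have hxi : ∀ t, 0 ≤ t → ∀ i, HasDerivAt (fun t => x t i) (-((A * Aᵀ) *ᵥ x t) i) t :=
    fun t ht i => (hasDerivAt_pi.1 (hx t ht)) i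
  have hsum : ∀ t, 0 ≤ t → ∑ i, x t i = ∑ i, x 0 i := by
    have hd : ∀ t, 0 ≤ t → HasDerivAt (fun t => ∑ i, x t i) 0 t := by
      intro t ht
      have h := HasDerivAt.fun_sum (u := Finset.univ) fun i _ => hxi t ht i
      refine h.congr_deriv (Eq.symm ?_)
      have h2 := lap_dot A (fun _ => 1) (x t)
      simp only [hcol, zero_mul, one_mul, Finset.sum_const_zero] at h2
      exact (by rw [Finset.sum_neg_distrib, h2, neg_zero] : ∑ i, -((A * Aᵀ) *ᵥ x t) i = 0).symm
    intro t ht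
    exact constant_of_has_deriv_right_zero (a := 0) (b := t)
      (fun s hs => (hd s hs.1).continuousAt.continuousWithinAt)
      (fun s hs => (hd s hs.1).hasDerivWithinAt) t ⟨ht, le_rfl⟩
  obtain ⟨K, hK, hP⟩ := poincare A hA hconn
  set μ : ℝ := (∑ i, x 0 i) / n with hμ
  have hen : ∀ z : Fin n → ℝ, ∀ j, ∑ l, A l j * (z l - μ) = ∑ l, A l j * z l := by
    intro z j
    simp only [mul_sub, Finset.sum_sub_distrib, hcol, sub_zero]
  set c : ℝ := 2 * n / K with hc
  have hcpos : 0 < c := by positivity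
  have hV : ∀ t, 0 ≤ t → HasDerivAt (fun t => ∑ i, (x t i - μ) ^ 2)
      (-2 * dirEnergy A (x t)) t := by
    intro t ht
    have h := HasDerivAt.fun_sum (u := Finset.univ)
      fun i _ => ((hxi t ht i).sub_const μ).fun_pow 2
    refine h.congr_deriv (Eq.symm ?_)
    have h2 := lap_dot A (fun i => x t i - μ) (x t)
    simp only [hen] at h2
    have h3 : dirEnergy A (x t) = ∑ i, (x t i - μ) * ((A * Aᵀ) *ᵥ x t) i := by
      rw [h2]; simp only [dirEnergy, sq]
    rw [h3, Finset.mul_sum]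
    refine Finset.sum_congr rfl fun i _ => ?_
    simp
    try ring
  have hPt : ∀ t, 0 ≤ t → c * ∑ i, (x t i - μ) ^ 2 ≤ 2 * dirEnergy A (x t) := by
    intro t ht
    have h := hP (fun i => x t i - μ) (by
      rw [Finset.sum_sub_distrib, hsum t ht, hμ]
      simp
      field_simp
      try simp)
    have h2 : dirEnergy A (fun i => x t i - μ) = dirEnergy A (x t) := by
      simp only [dirEnergy, hen]
    rw [h2] at h
    rw [hc, div_mul_eq_mul_div, div_le_iff₀ hK]
    linarith
  have hg : ∀ t, 0 ≤ t → HasDerivAt (fun t => (∑ i, (x t i - μ) ^ 2) * Real.exp (c * t))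
      ((-2 * dirEnergy A (x t)) * Real.exp (c * t) +
        (∑ i, (x t i - μ) ^ 2) * (Real.exp (c * t) * (c * 1))) t := fun t ht =>
    (hV t ht).mul (((hasDerivAt_id t).const_mul c).exp)
  have hanti : AntitoneOn (fun t => (∑ i, (x t i - μ) ^ 2) * Real.exp (c * t)) (Set.Ici 0) := by
    refine antitoneOn_of_deriv_nonpos (convex_Ici 0)
      (fun t ht => (hg t ht).continuousAt.continuousWithinAt)
      (fun t ht => (hg t (interior_subset ht)).differentiableAt.differentiableWithinAt) ?_
    intro t ht
    rw [(hg t (interior_subset ht)).deriv]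
    nlinarith [hPt t (interior_subset ht), Real.exp_pos (c * t)]
  rw [tendsto_pi_nhds]
  intro i
  rw [← tendsto_sub_nhds_zero_iff]
  have hsq : Filter.Tendsto (fun t => (x t i - μ) ^ 2) Filter.atTop (nhds 0) := by
    have hlim : Filter.Tendsto (fun t => (∑ i, (x 0 i - μ) ^ 2) * Real.exp (-(c * t)))
        Filter.atTop (nhds 0) := by
      have h := (Real.tendsto_exp_neg_atTop_nhds_zero.comp
        (Filter.tendsto_id.const_mul_atTop hcpos)).const_mul (∑ i, (x 0 i - μ) ^ 2)
      simpa using h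
    refine squeeze_zero' (Filter.Eventually.of_forall fun t => sq_nonneg _) ?_ hlim
    filter_upwards [Filter.eventually_ge_atTop 0] with t ht
    have h := hanti (Set.mem_Ici.2 le_rfl) (Set.mem_Ici.2 ht) ht
    simp only [mul_zero, Real.exp_zero, mul_one] at h
    have h1 : (x t i - μ) ^ 2 ≤ ∑ i, (x t i - μ) ^ 2 :=
      Finset.single_le_sum (f := fun i => (x t i - μ) ^ 2)
        (fun _ _ => sq_nonneg _) (Finset.mem_univ i)
    rw [Real.exp_neg, ← div_eq_mul_inv, le_div_iff₀ (Real.exp_pos _)]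
    exact (mul_le_mul_of_nonneg_right h1 (Real.exp_pos _).le).trans h
  have h := hsq.sqrt
  simp only [Real.sqrt_sq_eq_abs, Real.sqrt_zero] at h
  exact (tendsto_zero_iff_abs_tendsto_zero _).2 h
end

section
/- Consider n agents partitioned into p nonempty groups, with membership matrix A_H and group Laplacian 𝔾 = A_G A_Gᵀ. If (x,y) : ℝ → ℝⁿ × ℝᵖ is a differentiable solution of x′ = −x + A_H(A_HᵀA_H)⁻¹ y, y′ = A_Hᵀ x − (I_p + 𝔾) y, then the quantity x₁(t) + ⋯ + xₙ(t) + y₁(t) + ⋯ + y_p(t) is constant in t. -/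
open Matrix

/-- The 0/1 membership matrix of the partition of the `n` agents into `p` groups
determined by `χ`. -/
def membershipMatrix {n p : ℕ} (χ : Fin n → Fin p) : Matrix (Fin n) (Fin p) ℝ :=
  Matrix.of fun i j => if χ i = j then 1 else 0

theorem membership_mulVec_one {n p : ℕ} (χ : Fin n → Fin p) :
    membershipMatrix χ *ᵥ (1 : Fin p → ℝ) = 1 := by
  ext i
  simp [membershipMatrix, Matrix.mulVec, dotProduct]

theorem membership_gram {n p : ℕ} (χ : Fin n → Fin p) :
    (membershipMatrix χ)ᵀ * membershipMatrix χ =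
      Matrix.diagonal fun j => ∑ i, if χ i = j then (1 : ℝ) else 0 := by
  ext j k
  rw [Matrix.mul_apply, Matrix.diagonal_apply]
  split_ifs with h
  · subst h
    refine Finset.sum_congr rfl fun i _ => ?_
    by_cases hi : χ i = j <;> simp [membershipMatrix, hi]
  · refine Finset.sum_eq_zero fun i _ => ?_
    by_cases hi : χ i = j
    · have : χ i ≠ k := fun hk => h (hi.symm.trans hk)
      simp [membershipMatrix, this]
    · simp [membershipMatrix, hi]

theorem membership_gram_isUnit {n p : ℕ} (χ : Fin n → Fin p) (hχ : Function.Surjective χ) :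
    IsUnit ((membershipMatrix χ)ᵀ * membershipMatrix χ).det := by
  rw [membership_gram, Matrix.det_diagonal, isUnit_iff_ne_zero, Finset.prod_ne_zero_iff]
  intro j _
  obtain ⟨i, hi⟩ := hχ j
  refine ne_of_gt (Finset.sum_pos' (fun i _ => ?_) ⟨i, Finset.mem_univ _, by simp [hi]⟩)
  split_ifs <;> norm_num

theorem incidence_one_vecMul {p q : ℕ} (A : Matrix (Fin p) (Fin q) ℝ)
    (h : IsIncidenceMatrix A) : (1 : Fin p → ℝ) ᵥ* A = 0 := by
  ext j
  obtain ⟨i, k, hik, hi, hk, hl⟩ := h j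
  have : ∑ l, A l j = A i j + A k j :=
    Fintype.sum_eq_add i k hik fun l hh => hl l hh.1 hh.2
  simp [Matrix.vecMul, dotProduct, this, hi, hk]

/-- Along any differentiable solution of `x' = -x + A_H (A_Hᵀ A_H)⁻¹ y`,
`y' = A_Hᵀ x - (I_p + 𝔾) y`, the quantity `∑ᵢ xᵢ(t) + ∑ⱼ yⱼ(t)` is constant. -/
theorem stmt11 {n p q : ℕ} (χ : Fin n → Fin p) (hχ : Function.Surjective χ)
    (AG : Matrix (Fin p) (Fin q) ℝ) (hAG : IsIncidenceMatrix AG)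
    (x : ℝ → Fin n → ℝ) (y : ℝ → Fin p → ℝ)
    (hx : ∀ t : ℝ, HasDerivAt x
      (-(x t) + (membershipMatrix χ * ((membershipMatrix χ)ᵀ * membershipMatrix χ)⁻¹) *ᵥ y t) t)
    (hy : ∀ t : ℝ, HasDerivAt y
      ((membershipMatrix χ)ᵀ *ᵥ x t - (1 + AG * AGᵀ) *ᵥ y t) t) :
    ∀ t t' : ℝ, (∑ i, x t i) + (∑ j, y t j) = (∑ i, x t' i) + (∑ j, y t' j) := by
  have hder : ∀ t : ℝ, HasDerivAt (fun t => (∑ i, x t i) + (∑ j, y t j)) 0 t := by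
    intro t
    have h1 := HasDerivAt.fun_sum (u := Finset.univ) fun i _ => (hasDerivAt_pi.1 (hx t)) i
    have h2 := HasDerivAt.fun_sum (u := Finset.univ) fun j _ => (hasDerivAt_pi.1 (hy t)) j
    refine (h1.add h2).congr_deriv ?_
    have e1 : (1 : Fin p → ℝ) ᵥ* (membershipMatrix χ)ᵀ = 1 := by
      rw [Matrix.vecMul_transpose, membership_mulVec_one]
    have e2 : (1 : Fin n → ℝ) ᵥ*
        (membershipMatrix χ * ((membershipMatrix χ)ᵀ * membershipMatrix χ)⁻¹) = 1 := by
      rw [← e1, Matrix.vecMul_vecMul, ← Matrix.mul_assoc,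
        Matrix.mul_nonsing_inv _ (membership_gram_isUnit χ hχ), Matrix.vecMul_one]
    have e3 : (1 : Fin p → ℝ) ᵥ* (1 + AG * AGᵀ) = 1 := by
      rw [Matrix.vecMul_add, ← Matrix.vecMul_vecMul, incidence_one_vecMul AG hAG]
      simp
    have f1 : ∀ v : Fin n → ℝ, ∑ i, v i = 1 ⬝ᵥ v := fun v => (one_dotProduct v).symm
    have f2 : ∀ v : Fin p → ℝ, ∑ i, v i = 1 ⬝ᵥ v := fun v => (one_dotProduct v).symm
    rw [f1, f2, dotProduct_add, dotProduct_sub, dotProduct_mulVec, dotProduct_mulVec,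
      dotProduct_mulVec, e1, e2, e3, dotProduct_neg]
    ring
  exact is_const_of_deriv_eq_zero (fun t => (hder t).differentiableAt) fun t => (hder t).deriv
end

section
/- Let A be the incidence matrix of a connected directed graph on n nodes and m edges, let W = diag(W₁,…,W_m) be any diagonal matrix, and let A_{r1} and A_{r2} be reduced incidence matrices obtained from A by deleting one (possibly different) row each. Then det(A_{r1} W A_{r2}ᵀ) = 0 if and only if det(A_{r1} W A_{r1}ᵀ) = 0; in particular, all (n−1)-minors of A W Aᵀ vanish simultaneously. -/
open Matrix

/-- The reduced incidence matrix obtained from `A` by deleting row `i0`. -/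
def reducedIncidence {n m : ℕ} (A : Matrix (Fin (n + 1)) (Fin m) ℝ) (i0 : Fin (n + 1)) :
    Matrix (Fin n) (Fin m) ℝ :=
  A.submatrix i0.succAbove id

theorem colSum_zero {n m : ℕ} (A : Matrix (Fin (n + 1)) (Fin m) ℝ)
    (hA : IsIncidenceMatrix A) (j : Fin m) : ∑ i, A i j = 0 := by
  obtain ⟨i, k, hik, h1, h2, h3⟩ := hA j
  rw [← Finset.sum_subset (Finset.subset_univ {i, k})]
  · rw [Finset.sum_pair hik, h1, h2]; norm_num
  · intro x _ hx
    simp only [Finset.mem_insert, Finset.mem_singleton, not_or] at hx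
    exact h3 x hx.1 hx.2

/-- Changing the second deleted row changes the determinant by a unit. -/
theorem det_right {n m : ℕ} (A : Matrix (Fin (n + 1)) (Fin m) ℝ)
    (hA : IsIncidenceMatrix A) (w : Fin m → ℝ) (i0 i1 i2 : Fin (n + 1)) :
    (reducedIncidence A i0 * Matrix.diagonal w * (reducedIncidence A i1)ᵀ).det = 0 ↔
      (reducedIncidence A i0 * Matrix.diagonal w * (reducedIncidence A i2)ᵀ).det = 0 := by
  have key := Matrix.submatrix_succAbove_det_eq_negOnePow_submatrix_succAbove_det'
    (reducedIncidence A i0 * Matrix.diagonal w * Aᵀ) (by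
      intro i
      simp only [Matrix.mul_apply, Matrix.transpose_apply]
      rw [Finset.sum_comm]
      simp only [← Finset.mul_sum, colSum_zero A hA, mul_zero, Finset.sum_const_zero]) i1 i2
  have e : ∀ i : Fin (n + 1),
      reducedIncidence A i0 * Matrix.diagonal w * (reducedIncidence A i)ᵀ =
      (reducedIncidence A i0 * Matrix.diagonal w * Aᵀ).submatrix id i.succAbove := fun i => rfl
  rw [e i1, e i2, key, Units.smul_def, smul_eq_zero]
  simp

theorem det_symm {n m : ℕ} (A : Matrix (Fin (n + 1)) (Fin m) ℝ)
    (w : Fin m → ℝ) (i0 i1 : Fin (n + 1)) :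
    (reducedIncidence A i0 * Matrix.diagonal w * (reducedIncidence A i1)ᵀ).det =
      (reducedIncidence A i1 * Matrix.diagonal w * (reducedIncidence A i0)ᵀ).det := by
  rw [← Matrix.det_transpose]
  simp [Matrix.transpose_mul, Matrix.mul_assoc]

/-- For any diagonal weight matrix `W` and reduced incidence matrices `A_{r1}`,
`A_{r2}` (obtained by deleting one row each), `det (A_{r1} W A_{r2}ᵀ) = 0` iff
`det (A_{r1} W A_{r1}ᵀ) = 0`; in particular all `(n-1)`-minors of `A W Aᵀ` vanish
simultaneously. -/
theorem stmt15 {n m : ℕ} (A : Matrix (Fin (n + 1)) (Fin m) ℝ)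
    (hA : IsIncidenceMatrix A) (hconn : IsConnectedIncidence A)
    (w : Fin m → ℝ) :
    (∀ i0 i1 : Fin (n + 1),
      (reducedIncidence A i0 * Matrix.diagonal w * (reducedIncidence A i1)ᵀ).det = 0 ↔
      (reducedIncidence A i0 * Matrix.diagonal w * (reducedIncidence A i0)ᵀ).det = 0) ∧
    (∀ i0 i1 i0' i1' : Fin (n + 1),
      (reducedIncidence A i0 * Matrix.diagonal w * (reducedIncidence A i1)ᵀ).det = 0 ↔
      (reducedIncidence A i0' * Matrix.diagonal w * (reducedIncidence A i1')ᵀ).det = 0) := by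
  refine ⟨fun i0 i1 => det_right A hA w i0 i1 i0, fun i0 i1 i0' i1' => ?_⟩
  rw [det_right A hA w i0 i1 i0', det_symm A w i0 i0', det_right A hA w i0' i0 i1']
end

section
/- Let A be the incidence matrix of a connected directed graph on n nodes and m edges, let W = diag(W₁,…,W_m) be a diagonal matrix of edge weights, and let A_r be the reduced incidence matrix obtained from A by deleting one row. Then det(A_r W A_rᵀ) = Σ_T ∏_{j ∈ T} W_j, where the sum ranges over all sets T of n−1 edge indices whose corresponding edges form a spanning tree of the underlying graph (the weighted matrix-tree expansion). -/
open Matrix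

/-- A set `T` of `n - 1` edges (columns of `A`) is a spanning tree of the
underlying graph of an incidence matrix on `n` nodes: it has `n - 1` edges and
the subgraph formed by the edges of `T` connects all the nodes. -/
def IsSpanningTree {n m : ℕ} (A : Matrix (Fin n) (Fin m) ℝ) (T : Finset (Fin m)) : Prop :=
  T.card = n - 1 ∧
  ∀ i k : Fin n, Relation.ReflTransGen
    (fun a b => a ≠ b ∧ ∃ j ∈ T, A a j ≠ 0 ∧ A b j ≠ 0) i k

/-- The finite set of all spanning trees of the underlying graph of `A`. -/
noncomputable def spanningTrees {n m : ℕ} (A : Matrix (Fin n) (Fin m) ℝ) :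
    Finset (Finset (Fin m)) :=
  @Finset.filter _ (fun T => IsSpanningTree A T) (Classical.decPred _) Finset.univ

theorem aux_binet {n m : ℕ} (B : Matrix (Fin n) (Fin m) ℝ) (w : Fin m → ℝ) :
    (B * Matrix.diagonal w * Bᵀ).det =
      ∑ r : Fin n → Fin m, (∏ i, w (r i)) * ((∏ i, B i (r i)) * (B.submatrix id r).det) := by
  have h1 : (B * Matrix.diagonal w * Bᵀ) =
      fun i => ∑ j, (B i j * w j) • (Bᵀ j) := by
    funext i k
    rw [Matrix.mul_apply]; simp [Matrix.mul_diagonal]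
  have h2 : (B * Matrix.diagonal w * Bᵀ).det =
      (Matrix.detRowAlternating (R := ℝ) (n := Fin n)).toMultilinearMap
        (fun i => ∑ j, (B i j * w j) • (Bᵀ j)) := by
    rw [h1]; rfl
  rw [h2, MultilinearMap.map_sum]
  refine Finset.sum_congr rfl fun r _ => ?_
  rw [MultilinearMap.map_smul_univ, Finset.prod_mul_distrib, ← Matrix.det_transpose (B.submatrix id r)]
  rw [smul_eq_mul, mul_comm (∏ i, B i (r i)), mul_assoc]
  rfl

theorem aux_fiber {n m : ℕ} (B : Matrix (Fin n) (Fin m) ℝ) (w : Fin m → ℝ)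
    (T : Finset (Fin m)) (e : Fin n ≃ T) :
    ∑ r : Fin n → Fin m with Finset.univ.image r = T,
      (∏ i, w (r i)) * ((∏ i, B i (r i)) * (B.submatrix id r).det) =
    (∏ j ∈ T, w j) * (B.submatrix id (fun i => (e i : Fin m))).det ^ 2 := by
  have hw : ∀ σ : Equiv.Perm (Fin n), ∏ i, w (e (σ i)) = ∏ j ∈ T, w j := by
    intro σ
    rw [← Finset.prod_coe_sort T w]
    exact Fintype.prod_equiv (σ.trans e) _ _ (fun i => rfl)
  have hd : ∀ σ : Equiv.Perm (Fin n), (B.submatrix id (fun i => (e (σ i) : Fin m))).det =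
      (Equiv.Perm.sign σ : ℤ) * (B.submatrix id (fun i => (e i : Fin m))).det := by
    intro σ
    rw [← Matrix.det_permute' σ]; rfl
  have hs : (B.submatrix id (fun i => (e i : Fin m))).det =
      ∑ σ : Equiv.Perm (Fin n), (Equiv.Perm.sign σ : ℤ) * ∏ i, B i (e (σ i)) := by
    rw [← Matrix.det_transpose, Matrix.det_apply']; rfl
  have : ∑ r : Fin n → Fin m with Finset.univ.image r = T,
      (∏ i, w (r i)) * ((∏ i, B i (r i)) * (B.submatrix id r).det) =
      ∑ σ : Equiv.Perm (Fin n), (∏ i, w (e (σ i))) *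
        ((∏ i, B i (e (σ i))) * (B.submatrix id (fun i => (e (σ i) : Fin m))).det) := by
    symm
    refine Finset.sum_bij (fun σ _ => fun i => (e (σ i) : Fin m)) ?_ ?_ ?_ ?_
    · intro σ _
      simp only [Finset.mem_filter, Finset.mem_univ, true_and]
      ext j
      simp only [Finset.mem_image, Finset.mem_univ, true_and]
      constructor
      · rintro ⟨i, rfl⟩; exact (e (σ i)).2
      · intro hj; exact ⟨σ.symm (e.symm ⟨j, hj⟩), by simp⟩
    · intro σ _ τ _ h
      ext i
      have := congrFun h i
      simpa [Fin.val_inj] using e.injective (Subtype.ext this)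
    · intro r hr
      simp only [Finset.mem_filter, Finset.mem_univ, true_and] at hr
      have hm : ∀ i, r i ∈ T := fun i => hr ▸ Finset.mem_image_of_mem r (Finset.mem_univ i)
      let g : Fin n → Fin n := fun i => e.symm ⟨r i, hm i⟩
      have hg : Function.Surjective g := by
        intro k
        have : (e k : Fin m) ∈ Finset.univ.image r := by rw [hr]; exact (e k).2
        obtain ⟨i, _, hi⟩ := Finset.mem_image.1 this
        refine ⟨i, ?_⟩
        simp only [g]
        rw [Equiv.symm_apply_eq]
        exact Subtype.ext hi
      refine ⟨Equiv.ofBijective g (Finite.surjective_iff_bijective.1 hg), Finset.mem_univ _, ?_⟩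
      funext i
      simp [g]
    · intro σ _; rfl
  rw [this, pow_two]
  conv_rhs => rw [hs, Finset.sum_mul, Finset.mul_sum]
  refine Finset.sum_congr rfl fun σ _ => ?_
  rw [hw, hd, hs]
  ring

theorem aux_fiber_zero {n m : ℕ} (B : Matrix (Fin n) (Fin m) ℝ) (w : Fin m → ℝ)
    (T : Finset (Fin m)) (hT : T.card ≠ n) :
    ∑ r : Fin n → Fin m with Finset.univ.image r = T,
      (∏ i, w (r i)) * ((∏ i, B i (r i)) * (B.submatrix id r).det) = 0 := by
  refine Finset.sum_eq_zero fun r hr => ?_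
  simp only [Finset.mem_filter, Finset.mem_univ, true_and] at hr
  have hni : ¬ Function.Injective r := by
    intro hi
    apply hT
    rw [← hr, Finset.card_image_of_injective _ hi]
    simp
  simp only [Function.Injective, not_forall] at hni
  obtain ⟨a, b, hab, hne⟩ := hni
  rw [Matrix.det_zero_of_column_eq hne (fun k => by simp [hab])]
  simp

theorem aux_det_zero {n m : ℕ} (A : Matrix (Fin (n + 1)) (Fin m) ℝ)
    (hA : IsIncidenceMatrix A) (i0 : Fin (n + 1)) (T : Finset (Fin m)) (e : Fin n ≃ T)
    (hT : ¬ IsSpanningTree A T) :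
    ((reducedIncidence A i0).submatrix id (fun i => (e i : Fin m))).det = 0 := by
  classical
  set R : Fin (n + 1) → Fin (n + 1) → Prop :=
    (fun a b => a ≠ b ∧ ∃ j ∈ T, A a j ≠ 0 ∧ A b j ≠ 0) with hR
  have hcard : T.card = n := by
    have := Fintype.card_congr e
    simpa using this.symm
  have hsym : ∀ ⦃a b⦄, R a b → R b a := fun a b ⟨h1, j, hj, h2, h3⟩ => ⟨h1.symm, j, hj, h3, h2⟩
  have hex : ∃ v, ¬ Relation.ReflTransGen R i0 v := by
    by_contra! h
    apply hT
    refine ⟨by simpa using hcard, fun i k => ?_⟩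
    have h1 : Relation.ReflTransGen R i i0 := by
      have := (h i).swap
      exact Relation.ReflTransGen.mono (fun a b hab => hsym hab) _ _ this
    exact h1.trans (h k)
  obtain ⟨v, hv⟩ := hex
  let x : Fin (n + 1) → ℝ := fun u => if Relation.ReflTransGen R i0 u then 0 else 1
  have hx0 : x i0 = 0 := by simp [x, Relation.ReflTransGen.refl]
  have hv0 : v ≠ i0 := by rintro rfl; exact hv .refl
  apply Matrix.exists_vecMul_eq_zero_iff.1
  refine ⟨fun u => x (i0.succAbove u), ?_, ?_⟩
  · intro h
    obtain ⟨u, rfl⟩ := Fin.exists_succAbove_eq hv0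
    have := congrFun h u
    simp [x, hv] at this
  · funext t
    have h1 : ∑ u, x u * A u (e t) = 0 := by
      obtain ⟨i, k, hik, hi, hk, hl⟩ := hA (e t)
      have hxx : x i = x k := by
        have hr : R i k := ⟨hik, e t, (e t).2, by simp [hi], by simp [hk]⟩
        have : Relation.ReflTransGen R i0 i ↔ Relation.ReflTransGen R i0 k :=
          ⟨fun h => h.tail hr, fun h => h.tail (hsym hr)⟩
        simp [x, this]
      rw [Fintype.sum_eq_add i k hik (fun l hlk => by rw [hl l hlk.1 hlk.2, mul_zero]), hi, hk, hxx]
      ring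
    rw [Fin.sum_univ_succAbove _ i0, hx0, zero_mul, zero_add] at h1
    simpa [Matrix.vecMul, dotProduct, reducedIncidence] using h1

theorem aux_det_one {n m : ℕ} (A : Matrix (Fin (n + 1)) (Fin m) ℝ)
    (hA : IsIncidenceMatrix A) (i0 : Fin (n + 1)) (T : Finset (Fin m)) (e : Fin n ≃ T)
    (hT : IsSpanningTree A T) :
    ((reducedIncidence A i0).submatrix id (fun i => (e i : Fin m))).det ^ 2 = 1 := by
  classical
  have hintegral : ∀ i j, ∃ z : ℤ, (z : ℝ) = A i j := by
    intro l j
    obtain ⟨i, k, hik, hi, hk, hl⟩ := hA j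
    by_cases h1 : l = i
    · exact ⟨1, by rw [h1, hi]; simp⟩
    by_cases h2 : l = k
    · exact ⟨-1, by rw [h2, hk]; simp⟩
    · exact ⟨0, by rw [hl l h1 h2]; simp⟩
  choose Z hZ using hintegral
  have key : ∀ v, ∃ c : Fin n → ℤ, ∀ u, ∑ t, A u (e t) * (c t : ℝ) =
      (if u = v then 1 else 0) - (if u = i0 then 1 else 0) := by
    intro v
    have hr := hT.2 i0 v
    induction hr with
    | refl => exact ⟨0, by simp⟩
    | @tail a b _ hab ih =>
      obtain ⟨c, hc⟩ := ih
      obtain ⟨hne, j, hj, haj, hbj⟩ := hab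
      have hstep : ∃ s : ℤ, ∀ u, A u j * (s : ℝ) =
          (if u = b then 1 else 0) - (if u = a then 1 else 0) := by
        obtain ⟨i, k, hik, hi, hk, hl⟩ := hA j
        have ha : a = i ∨ a = k := by
          by_contra! h; exact haj (hl a h.1 h.2)
        have hb : b = i ∨ b = k := by
          by_contra! h; exact hbj (hl b h.1 h.2)
        have hcase : (a = i ∧ b = k) ∨ (a = k ∧ b = i) := by grind
        rcases hcase with ⟨rfl, rfl⟩ | ⟨rfl, rfl⟩
        · refine ⟨-1, fun u => ?_⟩
          by_cases h1 : u = a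
          · subst h1; simp [hi, hik]
          by_cases h2 : u = b
          · subst h2; simp [hk, h1]
          simp [h1, h2, hl u h1 h2]
        · refine ⟨1, fun u => ?_⟩
          by_cases h1 : u = b
          · subst h1; simp [hi, hik]
          by_cases h2 : u = a
          · subst h2; simp [hk, h1]
          simp [h1, h2, hl u h1 h2]
      obtain ⟨s, hs⟩ := hstep
      refine ⟨fun t => c t + if t = e.symm ⟨j, hj⟩ then s else 0, fun u => ?_⟩
      have : ∑ t, A u (e t) * ((c t + if t = e.symm ⟨j, hj⟩ then s else 0 : ℤ) : ℝ) =
          ∑ t, A u (e t) * (c t : ℝ) + A u j * s := by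
        push_cast
        simp [mul_add, Finset.sum_add_distrib]
      rw [this, hc, hs]
      ring
  choose c hc using key
  let BZ : Matrix (Fin n) (Fin n) ℤ := Matrix.of fun u t => Z (i0.succAbove u) (e t)
  let C : Matrix (Fin n) (Fin n) ℤ := Matrix.of fun t v => c (i0.succAbove v) t
  have hmul : BZ * C = 1 := by
    ext u v
    have := hc (i0.succAbove v) (i0.succAbove u)
    have h2 : (((BZ * C) u v : ℤ) : ℝ) = ((1 : Matrix (Fin n) (Fin n) ℤ) u v : ℤ) := by
      simp only [Matrix.mul_apply, BZ, C, Matrix.of_apply]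
      push_cast
      simp only [hZ]
      rw [this]
      simp [Matrix.one_apply, Fin.succAbove_ne]
    exact_mod_cast h2
  have hdet : BZ.det * C.det = 1 := by rw [← Matrix.det_mul, hmul, Matrix.det_one]
  have hsq : BZ.det ^ 2 = 1 := by
    rcases Int.isUnit_iff.1 (IsUnit.of_mul_eq_one _ hdet) with h | h <;> simp [h]
  have hB : (reducedIncidence A i0).submatrix id (fun i => (e i : Fin m)) =
      BZ.map (Int.castRingHom ℝ) := by
    ext u t
    simp [reducedIncidence, BZ, hZ]
  have hd : (BZ.map (Int.castRingHom ℝ)).det = (BZ.det : ℝ) := by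
    have := (Int.castRingHom ℝ).map_det BZ
    simpa using this.symm
  rw [hB, hd]
  exact_mod_cast hsq

/-- The weighted matrix-tree expansion: `det (A_r W A_rᵀ)` equals the sum, over all
spanning trees `T` of the underlying graph, of the products `∏_{j ∈ T} W_j`. -/
theorem stmt16 {n m : ℕ} (A : Matrix (Fin (n + 1)) (Fin m) ℝ)
    (hA : IsIncidenceMatrix A) (hconn : IsConnectedIncidence A)
    (w : Fin m → ℝ) (i0 : Fin (n + 1)) :
    (reducedIncidence A i0 * Matrix.diagonal w * (reducedIncidence A i0)ᵀ).det =
      ∑ T ∈ spanningTrees A, ∏ j ∈ T, w j := by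
  classical
  rw [aux_binet, ← Finset.sum_fiberwise (g := fun r : Fin n → Fin m => Finset.univ.image r)]
  have hst : spanningTrees A = Finset.univ.filter (fun T => IsSpanningTree A T) := by
    ext T; simp [spanningTrees]
  rw [hst, Finset.sum_filter]
  refine Finset.sum_congr rfl fun T _ => ?_
  by_cases hcard : T.card = n
  · have e : Fin n ≃ T := Fintype.equivOfCardEq (by simp [hcard])
    have := aux_fiber (reducedIncidence A i0) w T e
    rw [this]
    split_ifs with h
    · rw [aux_det_one A hA i0 T e h, mul_one]
    · rw [aux_det_zero A hA i0 T e h]; simp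
  · rw [if_neg (fun h => hcard (by simpa using h.1))]
    exact aux_fiber_zero (reducedIncidence A i0) w T hcard
end

section
/- Let A be the incidence matrix of a connected directed graph on n nodes and m edges and let W = diag(W₁,…,W_m) be a diagonal matrix of edge weights. Then the weighted Laplacian A W Aᵀ has rank n − 1 (equivalently, corank one, equivalently its kernel is one-dimensional) if and only if the sum of the spanning tree weights Σ_T ∏_{j ∈ T} W_j, taken over all spanning trees T of the underlying graph, is nonzero. -/
open Matrix

/-- Coefficient in the Cauchy-Binet expansion. -/
noncomputable def cbCoeff {k m : ℕ} (Q : Matrix (Fin k) (Fin m) ℝ) (T : Finset (Fin m)) : ℝ :=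
  ∑ f : Fin k → Fin m with Finset.univ.image f = T,
    (∏ i, Q i (f i)) * (Qᵀ.submatrix f id).det

theorem det_expand {k m : ℕ} (Q : Matrix (Fin k) (Fin m) ℝ) (w : Fin m → ℝ) :
    (Q * Matrix.diagonal w * Qᵀ).det =
      ∑ f : Fin k → Fin m, (∏ i, w (f i)) * ((∏ i, Q i (f i)) * (Qᵀ.submatrix f id).det) := by
  have h1 : (Q * Matrix.diagonal w * Qᵀ) =
      fun i => ∑ j : Fin m, (w j * Q i j) • (Qᵀ j) := by
    ext i l
    rw [Matrix.mul_apply]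
    simp only [Matrix.mul_diagonal, Finset.sum_apply, Pi.smul_apply, smul_eq_mul]
    exact Finset.sum_congr rfl fun j _ => by ring
  rw [h1]
  have h2 := (Matrix.detRowAlternating (n := Fin k) (R := ℝ)).toMultilinearMap.map_sum
    (fun (i : Fin k) (j : Fin m) => (w j * Q i j) • (Qᵀ j))
  refine h2.trans (Finset.sum_congr rfl fun f _ => ?_)
  have h3 := (Matrix.detRowAlternating (n := Fin k) (R := ℝ)).toMultilinearMap.map_smul_univ
    (fun i => w (f i) * Q i (f i)) (fun i => Qᵀ (f i))
  refine h3.trans ?_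
  rw [Finset.prod_mul_distrib, smul_eq_mul, mul_assoc]
  rfl

theorem det_sub_zero {k m : ℕ} (Q : Matrix (Fin k) (Fin m) ℝ) (f : Fin k → Fin m)
    (hf : ¬ Function.Injective f) : (Qᵀ.submatrix f id).det = 0 := by
  simp only [Function.Injective, not_forall] at hf
  obtain ⟨a, b, hab, hne⟩ := hf
  exact Matrix.det_zero_of_row_eq hne (by ext l; simp [hab])

theorem cauchy_binet {k m : ℕ} (Q : Matrix (Fin k) (Fin m) ℝ) (w : Fin m → ℝ) :
    (Q * Matrix.diagonal w * Qᵀ).det = ∑ T : Finset (Fin m), (∏ j ∈ T, w j) * cbCoeff Q T := by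
  rw [det_expand, ← Finset.sum_fiberwise (s := Finset.univ)
    (g := fun f : Fin k → Fin m => Finset.univ.image f)]
  refine Finset.sum_congr rfl fun T _ => ?_
  rw [cbCoeff, Finset.mul_sum]
  refine Finset.sum_congr rfl fun f hf => ?_
  simp only [Finset.mem_filter, Finset.mem_univ, true_and] at hf
  by_cases hi : Function.Injective f
  · rw [← hf, Finset.prod_image fun a _ b _ h => hi h]
  · rw [det_sub_zero Q f hi]; simp

theorem cbCoeff_card_ne {k m : ℕ} (Q : Matrix (Fin k) (Fin m) ℝ) (T : Finset (Fin m))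
    (hT : T.card ≠ k) : cbCoeff Q T = 0 := by
  refine Finset.sum_eq_zero fun f hf => ?_
  simp only [Finset.mem_filter, Finset.mem_univ, true_and] at hf
  rw [det_sub_zero Q f, mul_zero]
  intro hi
  apply hT
  rw [← hf, Finset.card_image_of_injective _ hi]; simp

theorem cbCoeff_eq {k m : ℕ} (Q : Matrix (Fin k) (Fin m) ℝ) (T : Finset (Fin m))
    (e : Fin k → Fin m) (he : Function.Injective e) (heT : Finset.univ.image e = T) :
    cbCoeff Q T = (Q.submatrix id e).det ^ 2 := by
  have h1 : cbCoeff Q T = ∑ σ : Equiv.Perm (Fin k),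
      (∏ i, Q i (e (σ i))) * (Qᵀ.submatrix (e ∘ σ) id).det := by
    symm
    refine Finset.sum_bij (fun σ _ => e ∘ σ) ?_ ?_ ?_ ?_
    · intro σ _
      simp only [Finset.mem_filter, Finset.mem_univ, true_and]
      rw [← heT, ← Finset.image_image, Finset.image_univ_equiv]
    · intro σ _ τ _ h
      ext i
      have := congrFun h i
      exact congrArg _ (he this)
    · intro f hf
      simp only [Finset.mem_filter, Finset.mem_univ, true_and] at hf
      have hcard : T.card = k := by rw [← heT, Finset.card_image_of_injective _ he]; simp
      have hfi : Function.Injective f := by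
        have : (Finset.univ.image f).card = (Finset.univ : Finset (Fin k)).card := by
          rw [hf, hcard]; simp
        have := Finset.card_image_iff.mp this
        intro a b h
        exact this (by simp) (by simp) h
      have hex : ∀ i, ∃ l, e l = f i := by
        intro i
        have : f i ∈ Finset.univ.image e := by rw [heT, ← hf]; simp
        simpa using this
      choose g hg using hex
      have hgi : Function.Injective g := fun a b h => hfi (by rw [← hg a, ← hg b, h])
      refine ⟨Equiv.ofBijective g (Finite.injective_iff_bijective.mp hgi), Finset.mem_univ _, ?_⟩
      ext i
      simp [hg]
    · intro σ _
      rfl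
  have h2 : ∀ σ : Equiv.Perm (Fin k), (Qᵀ.submatrix (e ∘ σ) id).det =
      (Equiv.Perm.sign σ : ℝ) * (Q.submatrix id e).det := by
    intro σ
    have : Qᵀ.submatrix (e ∘ σ) id = ((Q.submatrix id e)ᵀ).submatrix σ id := by
      ext; simp
    rw [this, Matrix.det_permute, Matrix.det_transpose]
  rw [h1, sq]
  nth_rw 2 [← Matrix.det_transpose]
  rw [Matrix.det_apply' (Q.submatrix id e)ᵀ, Finset.mul_sum]
  refine Finset.sum_congr rfl fun σ _ => ?_
  rw [h2]
  simp only [Matrix.transpose_apply, Matrix.submatrix_apply, id]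
  ring

theorem col_sum {V E : Type*} [Fintype V] [DecidableEq V] (A : Matrix V E ℝ)
    (hA : IsIncidenceMatrix A) (y : V → ℝ) (j : E) (a b : V) (hab : a ≠ b)
    (ha : A a j ≠ 0) (hb : A b j ≠ 0) :
    (∑ l, y l * A l j = A a j * (y a - y b)) ∧ (A a j = 1 ∨ A a j = -1) ∧ A b j = - A a j ∧
      ∀ l, l ≠ a → l ≠ b → A l j = 0 := by
  obtain ⟨i, k, hik, hi, hk, h0⟩ := hA j
  have hsum : ∑ l, y l * A l j = y i - y k := by
    rw [← Finset.sum_subset (Finset.subset_univ {i, k}), Finset.sum_pair hik, hi, hk]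
    · ring
    · intro l _ hl
      simp only [Finset.mem_insert, Finset.mem_singleton, not_or] at hl
      rw [h0 l hl.1 hl.2, mul_zero]
  have ha' : a = i ∨ a = k := by
    by_contra h; push Not at h; exact ha (h0 a h.1 h.2)
  have hb' : b = i ∨ b = k := by
    by_contra h; push Not at h; exact hb (h0 b h.1 h.2)
  rw [hsum]
  rcases ha' with rfl | rfl <;> rcases hb' with rfl | rfl
  · exact absurd rfl hab
  · exact ⟨by rw [hi]; ring, Or.inl hi, by rw [hi, hk], h0⟩
  · exact ⟨by rw [hk]; ring, Or.inr hk, by rw [hi, hk]; ring, fun l h h' => h0 l h' h⟩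
  · exact absurd rfl hab

theorem col_zero {V E : Type*} [Fintype V] [DecidableEq V] (A : Matrix V E ℝ)
    (hA : IsIncidenceMatrix A) (j : E) : ∑ l, A l j = 0 := by
  obtain ⟨i, k, hik, hi, hk, h0⟩ := hA j
  have := (col_sum A hA (fun _ => 1) j i k hik (by rw [hi]; simp) (by rw [hk]; simp)).1
  simpa using this

theorem entry_int {V E : Type*} (A : Matrix V E ℝ)
    (hA : IsIncidenceMatrix A) : ∃ Z : Matrix V E ℤ, ∀ i j, A i j = (Z i j : ℝ) := by
  have : ∀ i j, ∃ z : ℤ, A i j = z := by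
    intro l j
    obtain ⟨i, k, hik, hi, hk, h0⟩ := hA j
    by_cases h1 : l = i
    · exact ⟨1, by rw [h1, hi]; simp⟩
    by_cases h2 : l = k
    · exact ⟨-1, by rw [h2, hk]; simp⟩
    exact ⟨0, by rw [h0 l h1 h2]; simp⟩
  choose Z hZ using this
  exact ⟨Z, hZ⟩

/-- Adjacency through the edges of `T`. -/
def TAdj {n m : ℕ} (A : Matrix (Fin n) (Fin m) ℝ) (T : Finset (Fin m)) (a b : Fin n) : Prop :=
  a ≠ b ∧ ∃ j ∈ T, A a j ≠ 0 ∧ A b j ≠ 0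

theorem path_vec {n m k : ℕ} (A : Matrix (Fin n) (Fin m) ℝ) (hA : IsIncidenceMatrix A)
    (e : Fin k → Fin m) (T : Finset (Fin m)) (heT : Finset.univ.image e = T) (r v : Fin n)
    (h : Relation.ReflTransGen (TAdj A T) r v) :
    ∃ x : Fin k → ℤ, ∀ l, ∑ j, A l (e j) * (x j : ℝ) =
      (if l = v then 1 else 0) - (if l = r then 1 else 0) := by
  induction h with
  | refl => exact ⟨0, fun l => by simp⟩
  | @tail b c _ hbc ih =>
    obtain ⟨x, hx⟩ := ih
    obtain ⟨hne, j, hj, hb, hc⟩ := hbc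
    rw [← heT] at hj
    obtain ⟨q, -, rfl⟩ := Finset.mem_image.mp hj
    obtain ⟨-, hs, hcb, h0⟩ := col_sum A hA (fun _ => 1) (e q) c b hne.symm hc hb
    obtain ⟨s, hs'⟩ : ∃ s : ℤ, A c (e q) * (s : ℝ) = 1 := by
      rcases hs with h | h
      · exact ⟨1, by rw [h]; simp⟩
      · exact ⟨-1, by rw [h]; simp⟩
    refine ⟨x + Pi.single q s, fun l => ?_⟩
    have : ∑ j, A l (e j) * ((Pi.single q s : Fin k → ℤ) j : ℝ) = A l (e q) * s := by
      rw [Finset.sum_eq_single q]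
      · simp
      · intro p _ hp; simp [hp]
      · simp
    simp only [Pi.add_apply, Int.cast_add, mul_add, Finset.sum_add_distrib, hx, this]
    by_cases hlc : l = c
    · subst hlc
      rw [hs']; simp [hne.symm]; ring
    by_cases hlb : l = b
    · subst hlb
      rw [hcb, neg_mul, hs']; simp [hne]; ring
    rw [h0 l hlc hlb]; simp [hlc, hlb]

theorem det_sq {k m : ℕ} (A : Matrix (Fin (k + 1)) (Fin m) ℝ) (hA : IsIncidenceMatrix A)
    (e : Fin k → Fin m) (T : Finset (Fin m)) (heT : Finset.univ.image e = T)
    (h : ∀ a b, Relation.ReflTransGen (TAdj A T) a b) :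
    ((A.submatrix Fin.succ id).submatrix id e).det ^ 2 = 1 := by
  obtain ⟨Z, hZ⟩ := entry_int A hA
  choose x hx using fun v : Fin k => path_vec A hA e T heT 0 v.succ (h _ _)
  set M : Matrix (Fin k) (Fin k) ℤ := Matrix.of fun i j => Z i.succ (e j)
  set X : Matrix (Fin k) (Fin k) ℤ := Matrix.of fun j v => x v j
  have hMX : M * X = 1 := by
    ext i v
    have := hx v i.succ
    simp only [hZ] at this
    have h2 : ((M * X) i v : ℝ) = if i = v then 1 else 0 := by
      simp only [Matrix.mul_apply, M, X, Matrix.of_apply]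
      push_cast
      rw [this]
      simp
    rw [Matrix.one_apply]
    exact_mod_cast h2
  have hM : (A.submatrix Fin.succ id).submatrix id e = M.map (Int.castRingHom ℝ) := by
    ext i j; simp [M, hZ]
  have hu : IsUnit M.det := by
    refine IsUnit.of_mul_eq_one X.det ?_
    rw [← Matrix.det_mul, hMX, Matrix.det_one]
  rw [hM, ← RingHom.mapMatrix_apply, ← RingHom.map_det]
  rcases Int.isUnit_iff.mp hu with h | h <;> rw [h] <;> simp

theorem det_zero {k m : ℕ} (A : Matrix (Fin (k + 1)) (Fin m) ℝ) (hA : IsIncidenceMatrix A)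
    (e : Fin k → Fin m) (T : Finset (Fin m)) (heT : Finset.univ.image e = T)
    (h : ¬ ∀ a b, Relation.ReflTransGen (TAdj A T) a b) :
    ((A.submatrix Fin.succ id).submatrix id e).det = 0 := by
  classical
  have hsymm : ∀ a b, TAdj A T a b → TAdj A T b a := by
    rintro a b ⟨hne, j, hj, ha, hb⟩
    exact ⟨hne.symm, j, hj, hb, ha⟩
  have hsymm' : ∀ a b, Relation.ReflTransGen (TAdj A T) a b →
      Relation.ReflTransGen (TAdj A T) b a := by
    intro a b hab
    induction hab with
    | refl => exact .refl
    | tail _ h ih => exact Relation.ReflTransGen.head (hsymm _ _ h) ih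
  obtain ⟨v, hv⟩ : ∃ v, ¬ Relation.ReflTransGen (TAdj A T) 0 v := by
    by_contra hcon
    push Not at hcon
    exact h fun a b => (hsymm' _ _ (hcon a)).trans (hcon b)
  set y : Fin (k + 1) → ℝ := fun l => if Relation.ReflTransGen (TAdj A T) 0 l then 0 else 1
  have hy0 : y 0 = 0 := by simp [y, Relation.ReflTransGen.refl]
  have hyv : y v = 1 := by simp [y, hv]
  have hv0 : v ≠ 0 := by rintro rfl; exact hv .refl
  obtain ⟨u, rfl⟩ := Fin.exists_succ_eq.mpr hv0
  refine Matrix.exists_vecMul_eq_zero_iff.mp ⟨fun i => y i.succ, ?_, ?_⟩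
  · intro h0
    have := congrFun h0 u
    simp [hyv] at this
  · ext j
    have h1 : ∑ l, y l * A l (e j) = 0 := by
      obtain ⟨i, q, hik, hi, hk, -⟩ := hA (e j)
      have hi' : A i (e j) ≠ 0 := by rw [hi]; simp
      have hk' : A q (e j) ≠ 0 := by rw [hk]; simp
      rw [(col_sum A hA y (e j) i q hik hi' hk').1]
      have hadj : TAdj A T i q := ⟨hik, e j, by rw [← heT]; simp, hi', hk'⟩
      have : Relation.ReflTransGen (TAdj A T) 0 i ↔ Relation.ReflTransGen (TAdj A T) 0 q :=
        ⟨fun h => h.tail hadj, fun h => h.tail (hsymm _ _ hadj)⟩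
      simp [y, this]
    rw [Fin.sum_univ_succ, hy0, zero_mul, zero_add] at h1
    simpa [Matrix.vecMul, dotProduct] using h1

theorem det_reduced {k m : ℕ} (A : Matrix (Fin (k + 1)) (Fin m) ℝ) (hA : IsIncidenceMatrix A)
    (w : Fin m → ℝ) :
    ((A.submatrix Fin.succ id) * Matrix.diagonal w * (A.submatrix Fin.succ id)ᵀ).det =
      ∑ T ∈ spanningTrees A, ∏ j ∈ T, w j := by
  classical
  rw [cauchy_binet, spanningTrees, Finset.sum_filter]
  refine Finset.sum_congr rfl fun T _ => ?_
  by_cases hT : T.card = k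
  · have he : Function.Injective (T.orderEmbOfFin hT) := (T.orderEmbOfFin hT).injective
    have heT : Finset.univ.image (T.orderEmbOfFin hT) = T := by
      apply Finset.coe_injective
      simp
    rw [cbCoeff_eq _ T _ he heT]
    by_cases hc : ∀ a b, Relation.ReflTransGen (TAdj A T) a b
    · rw [det_sq A hA _ T heT hc, if_pos ⟨by simpa using hT, hc⟩, mul_one]
    · rw [det_zero A hA _ T heT hc, if_neg fun h => hc h.2]; simp
  · rw [cbCoeff_card_ne _ T hT, if_neg fun h => hT (by simpa using h.1), mul_zero]

theorem rank_eq {k m : ℕ} (A : Matrix (Fin (k + 1)) (Fin m) ℝ) (hA : IsIncidenceMatrix A)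
    (w : Fin m → ℝ) :
    (A * Matrix.diagonal w * Aᵀ).rank =
    ((A.submatrix Fin.succ id) * Matrix.diagonal w * (A.submatrix Fin.succ id)ᵀ).rank := by
  set B := A.submatrix Fin.succ id with hB
  let P : Matrix (Fin (k + 1)) (Fin k) ℝ :=
    Matrix.of fun i j => Fin.cases (motive := fun _ => ℝ) (-1) (fun i => if i = j then 1 else 0) i
  let S : Matrix (Fin k) (Fin (k + 1)) ℝ := (1 : Matrix _ _ ℝ).submatrix Fin.succ id
  have hP : A = P * B := by
    ext i j
    have h := col_zero A hA j
    rw [Fin.sum_univ_succ] at h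
    refine Fin.cases ?_ (fun i => ?_) i
    · simp [Matrix.mul_apply, P, B]
      linarith
    · simp [Matrix.mul_apply, P, B]
  have hS : B = S * A := by
    ext i j
    simp [Matrix.mul_apply, S, B, Matrix.one_apply]
  apply le_antisymm
  · have : A * Matrix.diagonal w * Aᵀ = P * (B * Matrix.diagonal w * Bᵀ) * Pᵀ := by
      conv_lhs => rw [hP]
      simp only [Matrix.transpose_mul, Matrix.mul_assoc]
    rw [this]
    exact (Matrix.rank_mul_le_left _ _).trans (Matrix.rank_mul_le_right _ _)
  · have : B * Matrix.diagonal w * Bᵀ = S * (A * Matrix.diagonal w * Aᵀ) * Sᵀ := by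
      conv_lhs => rw [hS]
      simp only [Matrix.transpose_mul, Matrix.mul_assoc]
    rw [this]
    exact (Matrix.rank_mul_le_left _ _).trans (Matrix.rank_mul_le_right _ _)

theorem rank_full_iff {k : ℕ} (R : Matrix (Fin k) (Fin k) ℝ) : R.rank = k ↔ R.det ≠ 0 := by
  constructor
  · intro h
    have hli : LinearIndependent ℝ R.col := by
      rw [linearIndependent_iff_card_eq_finrank_span, Fintype.card_fin, Set.finrank,
        ← Matrix.rank_eq_finrank_span_cols, h]
    have := Matrix.linearIndependent_cols_iff_isUnit.mp hli
    exact ((Matrix.isUnit_iff_isUnit_det _).mp this).ne_zero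
  · intro h
    have := Matrix.rank_of_isUnit R ((Matrix.isUnit_iff_isUnit_det _).mpr h.isUnit)
    simpa using this

/-- The weighted Laplacian `A W Aᵀ` has rank `n - 1` (corank one) if and only if
the sum of the spanning tree weights is nonzero. -/
theorem stmt17 {n m : ℕ} (A : Matrix (Fin n) (Fin m) ℝ)
    (hA : IsIncidenceMatrix A) (hconn : IsConnectedIncidence A)
    (w : Fin m → ℝ) :
    (A * Matrix.diagonal w * Aᵀ).rank = n - 1 ↔
      ∑ T ∈ spanningTrees A, ∏ j ∈ T, w j ≠ 0 := by
  cases n with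
  | zero =>
    have hm : ∀ j : Fin m, False := fun j => by
      obtain ⟨i, -⟩ := hA j
      exact i.elim0
    have : IsEmpty (Fin m) := ⟨hm⟩
    have h1 : spanningTrees A = {∅} := by
      ext T
      simp only [spanningTrees, Finset.mem_filter, Finset.mem_univ, true_and,
        Finset.mem_singleton]
      refine ⟨fun _ => Finset.eq_empty_of_isEmpty T, fun h => ⟨by simp [h], fun i => i.elim0⟩⟩
    rw [h1]
    have h2 := Matrix.rank_le_height (A * Matrix.diagonal w * Aᵀ)
    have h3 : (A * Matrix.diagonal w * Aᵀ).rank = 0 - 1 := by omega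
    exact ⟨fun _ => by simp, fun _ => h3⟩
  | succ k =>
    rw [rank_eq A hA w, Nat.add_sub_cancel, rank_full_iff, det_reduced A hA w]
end

section
/- Let A be the incidence matrix of a connected signed directed graph on n nodes and m edges, with weight matrix W = diag(W₁,…,W_m) where each W_j ∈ {−1, +1}. Call a spanning tree positive (resp. negative) if it contains an even (resp. odd) number of edges with weight −1. Then the kernel of A W Aᵀ has dimension strictly greater than one (equivalently, rank(A W Aᵀ) < n − 1, i.e. the equilibrium set of the linear flow x′ = −A W Aᵀ x has dimension higher than one) if and only if the number of positive spanning trees equals the number of negative spanning trees. -/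
open Matrix

/-- A spanning tree is *positive* if it contains an even number of edges with
weight `-1` (equivalently, its weight product is `+1`). -/
def IsPositiveTree {m : ℕ} (w : Fin m → ℝ) (T : Finset (Fin m)) : Prop :=
  Even (@Finset.filter _ (fun j => w j = -1) (Classical.decPred _) T).card

section Helpers

/-- Coefficient in the multilinear expansion. -/
noncomputable def cbCoef {k m : ℕ} (B : Matrix (Fin k) (Fin m) ℝ) (f : Fin k → Fin m) : ℝ :=
  (∏ i, B i (f i)) * (Bᵀ.submatrix f id).det

theorem cb_expand {k m : ℕ} (B : Matrix (Fin k) (Fin m) ℝ) (w : Fin m → ℝ) :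
    (B * Matrix.diagonal w * Bᵀ).det = ∑ f : Fin k → Fin m, (∏ i, w (f i)) * cbCoef B f := by
  have h1 : (B * Matrix.diagonal w * Bᵀ) =
      (fun i => ∑ j, (B i j * w j) • Bᵀ j : Matrix (Fin k) (Fin k) ℝ) := by
    ext i l
    rw [Matrix.mul_apply]
    simp [Matrix.mul_diagonal, Finset.sum_apply]
  rw [h1]
  have h2 := (Matrix.detRowAlternating (R := ℝ) (n := Fin k)).toMultilinearMap.map_sum
    (fun i (j : Fin m) => (B i j * w j) • Bᵀ j)
  refine h2.trans ?_
  refine Finset.sum_congr rfl fun f _ => ?_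
  rw [MultilinearMap.map_smul_univ, Finset.prod_mul_distrib, smul_eq_mul, cbCoef]
  have h3 : (Matrix.detRowAlternating (R := ℝ) (n := Fin k)).toMultilinearMap
    (fun i => Bᵀ (f i)) = (Bᵀ.submatrix f id).det := rfl
  rw [h3]
  ring

theorem cbCoef_zero {k m : ℕ} (B : Matrix (Fin k) (Fin m) ℝ) (f : Fin k → Fin m)
    (hf : ¬ Function.Injective f) : cbCoef B f = 0 := by
  unfold Function.Injective at hf
  push Not at hf
  obtain ⟨a, b, hab, hne⟩ := hf
  rw [cbCoef, Matrix.det_zero_of_row_eq hne, mul_zero]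
  ext l
  simp [hab]

theorem cb_main {k m : ℕ} (B : Matrix (Fin k) (Fin m) ℝ) (w : Fin m → ℝ) :
    (B * Matrix.diagonal w * Bᵀ).det = ∑ S ∈ Finset.univ.filter (fun S : Finset (Fin m) => S.card = k),
      (∏ j ∈ S, w j) * (B * Matrix.diagonal (fun j => if j ∈ S then (1:ℝ) else 0) * Bᵀ).det := by
  rw [cb_expand, ← Finset.sum_fiberwise Finset.univ (fun f : Fin k → Fin m => Finset.univ.image f),
    Finset.sum_filter]
  refine Finset.sum_congr rfl fun S _ => ?_
  split_ifs with hS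
  · rw [cb_expand, Finset.mul_sum, Finset.sum_filter]
    refine Finset.sum_congr rfl fun f _ => ?_
    by_cases hf : Function.Injective f
    · split_ifs with him
      · have h1 : ∏ i, (if f i ∈ S then (1:ℝ) else 0) = 1 := by
          refine Finset.prod_eq_one fun i _ => ?_
          rw [if_pos]
          rw [← him]; simp
        rw [h1, one_mul, ← him, Finset.prod_image (fun a _ b _ h => hf h)]
      · have : ∃ i, f i ∉ S := by
          by_contra hcon
          push Not at hcon
          apply him
          apply Finset.eq_of_subset_of_card_le
          · intro x hx
            obtain ⟨i, -, rfl⟩ := Finset.mem_image.1 hx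
            exact hcon i
          · rw [Finset.card_image_of_injective _ hf, hS]; simp
        obtain ⟨i, hi⟩ := this
        rw [Finset.prod_eq_zero (Finset.mem_univ i) (by rw [if_neg hi])]
        simp
    · simp [cbCoef_zero B f hf]
  · refine Finset.sum_eq_zero fun f hf => ?_
    rw [cbCoef_zero, mul_zero]
    intro hinj
    apply hS
    rw [← (Finset.mem_filter.1 hf).2, Finset.card_image_of_injective _ hinj]
    simp

theorem cb_sq {k m : ℕ} (B : Matrix (Fin k) (Fin m) ℝ) (S : Finset (Fin m)) (e : Fin k → Fin m)
    (he : Function.Injective e) (hS : Finset.univ.image e = S) :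
    (B * Matrix.diagonal (fun j => if j ∈ S then (1:ℝ) else 0) * Bᵀ).det
      = (B.submatrix id e).det ^ 2 := by
  have : (B * Matrix.diagonal (fun j => if j ∈ S then (1:ℝ) else 0) * Bᵀ)
      = B.submatrix id e * (B.submatrix id e)ᵀ := by
    ext i l
    rw [Matrix.mul_apply, Matrix.mul_apply]
    simp only [Matrix.mul_diagonal, Matrix.transpose_apply, Matrix.submatrix_apply, id]
    rw [← Finset.sum_image (s := Finset.univ) (g := e) (f := fun j => B i j * B l j)
      (fun a _ b _ h => he h), hS]
    simp [Finset.sum_ite_mem]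
  rw [this, Matrix.det_mul, Matrix.det_transpose, sq]

/-- Integer incidence matrix. -/
def incZ {n m : ℕ} (hd tl : Fin m → Fin n) : Matrix (Fin n) (Fin m) ℤ :=
  fun i j => (if i = hd j then 1 else 0) - (if i = tl j then 1 else 0)

theorem inc_exists {n m : ℕ} (A : Matrix (Fin n) (Fin m) ℝ) (hA : IsIncidenceMatrix A) :
    ∃ hd tl : Fin m → Fin n, (∀ j, hd j ≠ tl j) ∧ A = (incZ hd tl).map (Int.cast : ℤ → ℝ) := by
  choose hd tl hne h1 h2 h3 using hA
  refine ⟨hd, tl, hne, ?_⟩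
  ext i j
  simp only [incZ, Matrix.map_apply]
  by_cases hi : i = hd j
  · subst hi
    simp [hne j, h1]
  · by_cases hi' : i = tl j
    · subst hi'
      simp [(hne j).symm, h2]
    · simp [hi, hi', h3 j i hi hi']

theorem incZ_ne {n m : ℕ} {hd tl : Fin m → Fin n} (hne : ∀ j, hd j ≠ tl j) (a : Fin n) (j : Fin m) :
    ((incZ hd tl).map (Int.cast : ℤ → ℝ)) a j ≠ 0 ↔ a = hd j ∨ a = tl j := by
  have := hne j
  simp only [incZ, Matrix.map_apply]
  by_cases hi : a = hd j
  · subst hi; simp [this]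
  · by_cases hi' : a = tl j
    · subst hi'; simp [this.symm]
    · simp [hi, hi']

theorem tree_det {k m : ℕ} (hd tl : Fin m → Fin (k+1)) (e : Fin k → Fin m)
    (hT : ∀ i, Relation.ReflTransGen
      (fun a b => a ≠ b ∧ ∃ j ∈ Finset.univ.image e, (a = hd j ∨ a = tl j) ∧ (b = hd j ∨ b = tl j)) 0 i) :
    IsUnit ((incZ hd tl).submatrix Fin.succ e).det := by
  set M := (incZ hd tl).submatrix Fin.succ e with hM
  have key : ∀ i : Fin (k+1), ∃ c : Fin k → ℤ, M *ᵥ c = fun l => if l.succ = i then 1 else 0 := by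
    intro i
    induction hT i with
    | refl => exact ⟨0, by ext l; simp [Fin.succ_ne_zero]⟩
    | tail _ hab ih =>
      obtain ⟨c, hc⟩ := ih
      obtain ⟨hne, j, hj, ha, hb⟩ := hab
      obtain ⟨q, -, rfl⟩ := Finset.mem_image.1 hj
      rcases ha with ha | ha <;> rcases hb with hb | hb
      · exact absurd (ha.trans hb.symm) hne
      · refine ⟨c - Pi.single q 1, ?_⟩
        rw [Matrix.mulVec_sub, hc]
        ext l
        simp [hM, incZ, ha, hb]
      · refine ⟨c + Pi.single q 1, ?_⟩
        rw [Matrix.mulVec_add, hc]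
        ext l
        simp [hM, incZ, ha, hb]
      · exact absurd (ha.trans hb.symm) hne
  choose c hc using key
  have : M * (Matrix.of fun l i => c (Fin.succ i) l) = 1 := by
    ext l i
    have := congrFun (hc i.succ) l
    simp only [Matrix.mulVec, dotProduct] at this
    rw [Matrix.mul_apply]
    simp only [Matrix.of_apply, this, Matrix.one_apply, Fin.succ_inj]
  exact Matrix.isUnit_det_of_right_inverse this

theorem nontree_det {k m : ℕ} (hd tl : Fin m → Fin (k+1)) (hne : ∀ j, hd j ≠ tl j) (e : Fin k → Fin m)
    (hT : ¬ ∀ i, Relation.ReflTransGen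
      (fun a b => a ≠ b ∧ ∃ j ∈ Finset.univ.image e, (a = hd j ∨ a = tl j) ∧ (b = hd j ∨ b = tl j)) 0 i) :
    ((incZ hd tl).submatrix Fin.succ e).det = 0 := by
  classical
  set R := (fun a b : Fin (k+1) => a ≠ b ∧ ∃ j ∈ Finset.univ.image e,
    (a = hd j ∨ a = tl j) ∧ (b = hd j ∨ b = tl j)) with hR
  push Not at hT
  obtain ⟨i, hi⟩ := hT
  rw [← Matrix.exists_vecMul_eq_zero_iff]
  let x : Fin (k+1) → ℤ := fun l => if Relation.ReflTransGen R 0 l then 0 else 1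
  have hx0 : x 0 = 0 := by simp [x, Relation.ReflTransGen.refl]
  refine ⟨fun l => x l.succ, ?_, ?_⟩
  · intro h
    have hi0 : i ≠ 0 := by
      rintro rfl
      exact hi Relation.ReflTransGen.refl
    obtain ⟨l, rfl⟩ := Fin.exists_succ_eq.2 hi0
    have := congrFun h l
    simp [x, hi] at this
  · ext q
    have h1 : ∑ l : Fin (k+1), x l * incZ hd tl l (e q) = x (hd (e q)) - x (tl (e q)) := by
      simp [incZ, mul_sub, Finset.sum_sub_distrib]
    rw [Fin.sum_univ_succ, hx0, zero_mul, zero_add] at h1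
    have h2 : x (hd (e q)) = x (tl (e q)) := by
      have : Relation.ReflTransGen R 0 (hd (e q)) ↔ Relation.ReflTransGen R 0 (tl (e q)) :=
        ⟨fun h => h.tail ⟨hne _, e q, by simp, by simp, by simp⟩,
          fun h => h.tail ⟨(hne _).symm, e q, by simp, by simp, by simp⟩⟩
      simp only [x, this]
    simp only [Matrix.vecMul, dotProduct, Matrix.submatrix_apply, Pi.zero_apply]
    rw [h1, h2, sub_self]

theorem ker_iff {k m : ℕ} (hd tl : Fin m → Fin (k+1)) (w : Fin m → ℝ)
    (A : Matrix (Fin (k+1)) (Fin m) ℝ) (hA : A = (incZ hd tl).map (Int.cast : ℤ → ℝ)) :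
    1 < Module.finrank ℝ (LinearMap.ker (Matrix.mulVecLin (A * Matrix.diagonal w * Aᵀ))) ↔
    (A.submatrix Fin.succ id * Matrix.diagonal w * (A.submatrix Fin.succ id)ᵀ).det = 0 := by
  set B := A.submatrix Fin.succ id with hB
  set L := A * Matrix.diagonal w * Aᵀ with hL
  have hcol : ∀ j, ∑ i, A i j = 0 := by
    intro j
    simp [hA, incZ]
  have hA1 : Aᵀ *ᵥ (fun _ => (1:ℝ)) = 0 := by
    ext j
    simp [Matrix.mulVec, dotProduct, hcol]
  have h1A : (fun _ => (1:ℝ)) ᵥ* A = 0 := by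
    ext j
    simp [Matrix.vecMul, dotProduct, hcol]
  have hL1 : L *ᵥ (fun _ => (1:ℝ)) = 0 := by
    rw [hL, ← Matrix.mulVec_mulVec, hA1, Matrix.mulVec_zero]
  have hsum : ∀ x, ∑ i, (L *ᵥ x) i = 0 := by
    intro x
    have : (fun _ => (1:ℝ)) ⬝ᵥ (L *ᵥ x) = 0 := by
      rw [Matrix.dotProduct_mulVec, hL, Matrix.mul_assoc, ← Matrix.vecMul_vecMul, h1A]
      simp
    simpa [dotProduct] using this
  have hsub : B * Matrix.diagonal w * Bᵀ = L.submatrix Fin.succ Fin.succ := by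
    ext i l
    simp [hL, hB, Matrix.mul_apply, Matrix.mul_diagonal]
  have hred : ∀ x : Fin (k+1) → ℝ, x 0 = 0 → ∀ i : Fin k,
      ((B * Matrix.diagonal w * Bᵀ) *ᵥ (fun l => x l.succ)) i = (L *ᵥ x) i.succ := by
    intro x hx i
    rw [hsub]
    simp only [Matrix.mulVec, dotProduct, Matrix.submatrix_apply]
    rw [Fin.sum_univ_succ (f := fun l => L i.succ l * x l), hx, mul_zero, zero_add]
  let v : LinearMap.ker (Matrix.mulVecLin L) := ⟨fun _ => 1, by simpa using hL1⟩
  have hv : v ≠ 0 := by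
    intro h
    have := congrFun (congrArg Subtype.val h) 0
    simp [v] at this
  rw [← Matrix.exists_mulVec_eq_zero_iff]
  constructor
  · intro h
    by_contra hcon
    push Not at hcon
    have : Module.finrank ℝ (LinearMap.ker (Matrix.mulVecLin L)) ≤ 1 := by
      refine finrank_le_one v fun y => ⟨y.1 0, ?_⟩
      have hy : L *ᵥ y.1 = 0 := LinearMap.mem_ker.1 y.2
      let z : Fin (k+1) → ℝ := y.1 - y.1 0 • (fun _ => (1:ℝ))
      have hz : L *ᵥ z = 0 := by
        simp only [z]
        rw [Matrix.mulVec_sub, Matrix.mulVec_smul, hL1, hy]; simp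
      have hz0 : z 0 = 0 := by simp [z]
      have hz' : (fun l : Fin k => z l.succ) = 0 := by
        by_contra hne
        refine hcon _ hne ?_
        ext i
        rw [hred z hz0 i, hz]; rfl
      ext l
      have hzl : z l = 0 := by
        refine Fin.cases hz0 (fun l => congrFun hz' l) l
      simp [z] at hzl
      simp [v]; linarith
    omega
  · rintro ⟨y, hy, hy0⟩
    by_contra hcon
    have h1 : Module.finrank ℝ (LinearMap.ker (Matrix.mulVecLin L)) = 1 := by
      have : 0 < Module.finrank ℝ (LinearMap.ker (Matrix.mulVecLin L)) :=
        Module.finrank_pos_iff_exists_ne_zero.2 ⟨v, hv⟩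
      omega
    rw [finrank_eq_one_iff_of_nonzero' v hv] at h1
    let x : Fin (k+1) → ℝ := Fin.cons 0 y
    have hs : ∀ i : Fin k, (L *ᵥ x) i.succ = 0 := by
      intro i
      rw [← hred x rfl i]
      exact congrFun hy0 i
    have hx : L *ᵥ x = 0 := by
      ext i
      refine Fin.cases ?_ hs i
      have := hsum x
      rw [Fin.sum_univ_succ] at this
      simpa [hs] using this
    obtain ⟨c, hc⟩ := h1 ⟨x, by simpa using hx⟩
    have hc' : ∀ l, c = x l := by
      intro l
      have := congrFun (congrArg Subtype.val hc) l
      simpa [v] using this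
    have hc0 : c = 0 := hc' 0
    apply hy
    ext l
    have := hc' l.succ
    simp [x, hc0] at this
    exact this.symm

theorem prod_sign {m : ℕ} (w : Fin m → ℝ) (hw : ∀ j, w j = 1 ∨ w j = -1) (T : Finset (Fin m)) :
    ∏ j ∈ T, w j = (@ite ℝ (IsPositiveTree w T) (Classical.dec _) 1 (-1)) := by
  classical
  have h : ∏ j ∈ T, w j = (-1) ^ (T.filter (fun j => w j = -1)).card := by
    rw [← Finset.prod_const, Finset.prod_filter]
    refine Finset.prod_congr rfl fun j _ => ?_
    split_ifs with h
    · exact h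
    · exact (hw j).resolve_right h
  have h2 : IsPositiveTree w T ↔ Even (T.filter (fun j => w j = -1)).card := by
    unfold IsPositiveTree
    convert Iff.rfl
  rw [h]
  split_ifs with hp
  · exact (h2.1 hp).neg_one_pow
  · exact (Nat.not_even_iff_odd.1 (fun h => hp (h2.2 h))).neg_one_pow

theorem det_trees {k m : ℕ} (A : Matrix (Fin (k+1)) (Fin m) ℝ) (hA : IsIncidenceMatrix A)
    (w : Fin m → ℝ) :
    (A.submatrix Fin.succ id * Matrix.diagonal w * (A.submatrix Fin.succ id)ᵀ).det =
      ∑ T ∈ spanningTrees A, ∏ j ∈ T, w j := by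
  classical
  obtain ⟨hd, tl, hne, hAe⟩ := inc_exists A hA
  rw [cb_main, spanningTrees, Finset.sum_filter, Finset.sum_filter]
  refine Finset.sum_congr rfl fun S _ => ?_
  by_cases hS : S.card = k
  swap
  · rw [if_neg hS, if_neg]
    exact fun h => hS h.1
  rw [if_pos hS]
  have he : Function.Injective (S.orderEmbOfFin hS) := (S.orderEmbOfFin hS).injective
  have him : Finset.univ.image (S.orderEmbOfFin hS) = S := Finset.image_orderEmbOfFin_univ S hS
  generalize (S.orderEmbOfFin hS : Fin k → Fin m) = e at he him
  rw [cb_sq _ S e he him]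
  have hdet : ((A.submatrix Fin.succ id).submatrix id e).det =
      ((((incZ hd tl).submatrix Fin.succ e).det : ℤ) : ℝ) := by
    rw [hAe]
    exact (RingHom.map_det (Int.castRingHom ℝ) _).symm
  rw [hdet]
  have hiff : IsSpanningTree A S ↔ ∀ i, Relation.ReflTransGen
      (fun a b => a ≠ b ∧ ∃ j ∈ Finset.univ.image e,
        (a = hd j ∨ a = tl j) ∧ (b = hd j ∨ b = tl j)) 0 i := by
    unfold IsSpanningTree
    rw [him, hAe]
    simp only [incZ_ne hne]
    constructor
    · exact fun h i => h.2 0 i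
    · intro h
      refine ⟨by simpa using hS, fun i l => ?_⟩
      refine Relation.ReflTransGen.trans ?_ (h l)
      refine (@Relation.ReflTransGen.stdSymm _ _ ⟨?_⟩).symm _ _ (h i)
      rintro a b ⟨hab, j, hj, h1, h2⟩
      exact ⟨hab.symm, j, hj, h2, h1⟩
  by_cases hT : IsSpanningTree A S
  · rw [if_pos hT]
    rcases Int.isUnit_iff.1 (tree_det hd tl e (hiff.1 hT)) with h | h <;> rw [h] <;> simp
  · rw [if_neg hT, nontree_det hd tl hne e (fun h => hT (hiff.2 h))]
    simp

theorem sum_trees {m : ℕ} (w : Fin m → ℝ) (hw : ∀ j, w j = 1 ∨ w j = -1)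
    (s : Finset (Finset (Fin m))) :
    ∑ T ∈ s, ∏ j ∈ T, w j = 0 ↔
      (@Finset.filter _ (fun T => IsPositiveTree w T) (Classical.decPred _) s).card =
        (@Finset.filter _ (fun T => ¬ IsPositiveTree w T) (Classical.decPred _) s).card := by
  classical
  simp only [prod_sign w hw]
  rw [Finset.sum_ite, Finset.sum_const, Finset.sum_const, nsmul_eq_mul, nsmul_eq_mul, mul_one,
    mul_neg_one, ← sub_eq_add_neg, sub_eq_zero, Nat.cast_inj]
  convert Iff.rfl

end Helpers

/-- On a connected signed digraph (all weights `±1`), the kernel of `A W Aᵀ` has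
dimension strictly greater than one (the equilibrium set of `x' = -A W Aᵀ x` has
dimension higher than one) if and only if the number of positive spanning trees
equals the number of negative spanning trees. -/
theorem stmt18 {n m : ℕ} (A : Matrix (Fin n) (Fin m) ℝ)
    (hA : IsIncidenceMatrix A) (hconn : IsConnectedIncidence A)
    (w : Fin m → ℝ) (hw : ∀ j, w j = 1 ∨ w j = -1) :
    1 < Module.finrank ℝ
        (LinearMap.ker (Matrix.mulVecLin (A * Matrix.diagonal w * Aᵀ))) ↔
      (@Finset.filter _ (fun T => IsPositiveTree w T) (Classical.decPred _)
          (spanningTrees A)).card =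
        (@Finset.filter _ (fun T => ¬ IsPositiveTree w T) (Classical.decPred _)
          (spanningTrees A)).card := by
  rw [← sum_trees w hw]
  rcases n with _ | k
  · have h0 : Module.finrank ℝ
        (LinearMap.ker (Matrix.mulVecLin (A * Matrix.diagonal w * Aᵀ))) ≤ 0 := by
      refine (Submodule.finrank_le _).trans ?_
      simp
    have hm : IsEmpty (Fin m) := ⟨fun j => (hA j).choose.elim0⟩
    have hs : spanningTrees A = {∅} := by
      ext T
      have hT : T = ∅ := Finset.eq_empty_of_isEmpty T
      classical
      rw [hT, spanningTrees, Finset.mem_filter]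
      refine ⟨fun _ => Finset.mem_singleton_self _, fun _ => ⟨Finset.mem_univ _, ?_⟩⟩
      exact ⟨rfl, fun i => i.elim0⟩
    rw [hs]
    simp only [Finset.sum_singleton, Finset.prod_empty, one_ne_zero, iff_false]
    omega
  · obtain ⟨hd, tl, -, hAe⟩ := inc_exists A hA
    rw [ker_iff hd tl w A hAe, det_trees A hA w]
end
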